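/- arXiv:2303.14938 — 2 statements merged into one kernel-verified Lean document; each statement's English description precedes it below -/
import Mathlib

section
/- Let μ be an absolutely continuous, log-concave probability measure on ℝⁿ and let 0 < ε < t. Then there exists a regular, log-concave probability measure ν on ℝⁿ such that C_P(ν) ≥ C_P(μ) − ε and ‖Cov(μ) − Cov(ν)‖_op < ε. Moreover, if μ is t-uniformly log-concave, then ν can be chosen to additionally be (t − ε)-uniformly log-concave. -/
open MeasureTheory Real
open scoped ENNReal RealInnerProductSpace

noncomputable section

abbrev Euc (n : ℕ) := EuclideanSpace ℝ (Fin n)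

/-- A nonnegative function `g` is log-concave: `g(ax+by) ≥ g(x)^a g(y)^b`. -/
def IsLogConcaveFun {n : ℕ} (g : Euc n → ℝ) : Prop :=
  (∀ x, 0 ≤ g x) ∧
  ∀ x y : Euc n, ∀ a b : ℝ, 0 ≤ a → 0 ≤ b → a + b = 1 →
    g x ^ a * g y ^ b ≤ g (a • x + b • y)

def IsLogConcaveMeasure {n : ℕ} (μ : Measure (Euc n)) : Prop :=
  ∃ ρ : Euc n → ℝ, Measurable ρ ∧ IsLogConcaveFun ρ ∧
    μ = volume.withDensity (fun x => ENNReal.ofReal (ρ x))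

def poincareSet {n : ℕ} (μ : Measure (Euc n)) : Set ℝ :=
  {C : ℝ | 0 ≤ C ∧ ∀ f : Euc n → ℝ, LocallyLipschitz f →
    Integrable (fun x => ‖gradient f x‖ ^ 2) μ →
    ∫ x, f x ^ 2 ∂μ - (∫ x, f x ∂μ) ^ 2 ≤ C * ∫ x, ‖gradient f x‖ ^ 2 ∂μ}

def poincareConst {n : ℕ} (μ : Measure (Euc n)) : ℝ := sInf (poincareSet μ)

def covMatrix {n : ℕ} (μ : Measure (Euc n)) : Matrix (Fin n) (Fin n) ℝ :=
  Matrix.of fun i j => ∫ x, x i * x j ∂μ - (∫ x, x i ∂μ) * (∫ x, x j ∂μ)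

def opNorm {n : ℕ} (M : Matrix (Fin n) (Fin n) ℝ) : ℝ :=
  ‖Matrix.toEuclideanCLM (𝕜 := ℝ) M‖

def IsIsotropic {n : ℕ} (μ : Measure (Euc n)) : Prop :=
  (∫ x, x ∂μ) = 0 ∧ ∀ i j, ∫ x, x i * x j ∂μ = if i = j then 1 else 0

def UniformlyLogConcave {n : ℕ} (t : ℝ) (μ : Measure (Euc n)) : Prop :=
  ∃ g : Euc n → ℝ, Measurable g ∧ IsLogConcaveFun g ∧
    μ = volume.withDensity (fun x => ENNReal.ofReal (Real.exp (-t * ‖x‖ ^ 2 / 2) * g x))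

def IsRegularPotential {n : ℕ} (ψ : Euc n → ℝ) : Prop :=
  ContDiff ℝ (⊤ : ℕ∞) ψ ∧
  (∃ ε : ℝ, 0 < ε ∧ ∀ x v : Euc n,
    ε * ‖v‖ ^ 2 ≤ iteratedFDeriv ℝ 2 ψ x ![v, v] ∧
    iteratedFDeriv ℝ 2 ψ x ![v, v] ≤ ε⁻¹ * ‖v‖ ^ 2) ∧
  (∀ m : ℕ, ∃ C : ℝ, ∃ k : ℕ, ∀ x, ‖iteratedFDeriv ℝ m ψ x‖ ≤ C * (1 + ‖x‖) ^ k)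

def IsRegularMeasure {n : ℕ} (μ : Measure (Euc n)) (ψ : Euc n → ℝ) : Prop :=
  IsRegularPotential ψ ∧ μ = volume.withDensity (fun x => ENNReal.ofReal (Real.exp (-ψ x)))

def IsTempered {n : ℕ} (ρ : Euc n → ℝ) (f : Euc n → ℝ) : Prop :=
  ContDiff ℝ (⊤ : ℕ∞) f ∧ ∀ m : ℕ, ∃ C : ℝ, 0 < C ∧ ∃ a : ℝ, 0 < a ∧ ∀ x,
    ‖iteratedFDeriv ℝ m f x‖ ≤ C / Real.sqrt (ρ x) * Real.exp (-a * ‖x‖)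

def lap {n : ℕ} (f : Euc n → ℝ) (x : Euc n) : ℝ :=
  ∑ i, iteratedFDeriv ℝ 2 f x ![EuclideanSpace.single i (1:ℝ), EuclideanSpace.single i (1:ℝ)]

def Lop {n : ℕ} (ψ u : Euc n → ℝ) (x : Euc n) : ℝ :=
  lap u x - ⟪gradient ψ x, gradient u x⟫

def gaussDensity (n : ℕ) (s : ℝ) (x : Euc n) : ℝ :=
  (2 * π * s) ^ (-(n : ℝ) / 2) * Real.exp (-‖x‖ ^ 2 / (2 * s))

def gaussMeasure (n : ℕ) (s : ℝ) : Measure (Euc n) :=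
  volume.withDensity fun x => ENNReal.ofReal (gaussDensity n s x)

def tiltZ {n : ℕ} (ρ : Euc n → ℝ) (t : ℝ) (θ : Euc n) : ℝ :=
  ∫ x, Real.exp (⟪θ, x⟫ - t * ‖x‖ ^ 2 / 2) * ρ x

def tiltDensity {n : ℕ} (ρ : Euc n → ℝ) (t : ℝ) (θ : Euc n) (x : Euc n) : ℝ :=
  Real.exp (⟪θ, x⟫ - t * ‖x‖ ^ 2 / 2) * ρ x / tiltZ ρ t θ

def tiltMeasure {n : ℕ} (ρ : Euc n → ℝ) (t : ℝ) (θ : Euc n) : Measure (Euc n) :=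
  volume.withDensity fun x => ENNReal.ofReal (tiltDensity ρ t θ x)

def varD {n : ℕ} (p : Euc n → ℝ) (f : Euc n → ℝ) : ℝ :=
  (∫ x, f x ^ 2 * p x) - (∫ x, f x * p x) ^ 2

end

/-!
Tilt the density by a small Gaussian, replace it by its supremum convolution with a Gaussian (the
Moreau regularization of the potential), and mollify the resulting potential. Infimal convolution
and mollification keep the strong convexity of the potential up to an error that vanishes with the
scale, while the Hessian becomes bounded from above. As a log-concave density is continuous almost
everywhere and decays exponentially, all integrals of functions of polynomial growth converge, and
with them the covariance matrices. A constant `C` below the Poincaré constant of `μ` is violated by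
a test function that can be truncated to be bounded with bounded gradient, hence by the
approximations too, once the scale is small.

Since the Poincaré constant is an infimum, it would be `0` if no constant were admissible, so a
Poincaré inequality is needed for the approximations, whose potentials are strongly convex. There
the points `x` and `x + u` are moved towards each other along `x + sin τ ^ 2 • u`, which increases
the product of the densities, and `f (x + u) - f x` is the integral of the derivative of `f` along
this path.
-/

namespace RegularApproximation

open Set Metric Filter Topology Convolution
open scoped ContDiff NNReal

noncomputable section

universe u

variable {E : Type u} [NormedAddCommGroup E] [InnerProductSpace ℝ E]

section LogConcavity

/-- `ρ = e^{-V}` with `V` being `s`-strongly convex in the extended sense, so that `ρ` may vanish.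
For `s = 0` this is log-concavity. -/
def IsStronglyLogConcaveFun (s : ℝ) (ρ : E → ℝ) : Prop :=
  (∀ x, 0 ≤ ρ x) ∧
  ∀ x y : E, ∀ p q : ℝ, 0 ≤ p → 0 ≤ q → p + q = 1 →
    ρ x ^ p * ρ y ^ q * exp (p * q * (s / 2) * ‖x - y‖ ^ 2) ≤ ρ (p • x + q • y)

variable {ρ : E → ℝ} {s t : ℝ}

lemma isStronglyLogConcaveFun_zero_iff {n : ℕ} {g : Euc n → ℝ} :
    IsStronglyLogConcaveFun 0 g ↔ IsLogConcaveFun g := by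
  simp [IsStronglyLogConcaveFun, IsLogConcaveFun]

lemma norm_convex_combination_sq (x y : E) {p q : ℝ} (hpq : p + q = 1) :
    ‖p • x + q • y‖ ^ 2 = p * ‖x‖ ^ 2 + q * ‖y‖ ^ 2 - p * q * ‖x - y‖ ^ 2 := by
  obtain rfl : q = 1 - p := by linarith
  rw [norm_add_sq_real, norm_sub_sq_real, norm_smul, norm_smul, real_inner_smul_left,
    real_inner_smul_right, mul_pow, mul_pow, Real.norm_eq_abs, Real.norm_eq_abs, sq_abs, sq_abs]
  ring

namespace IsStronglyLogConcaveFun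

lemma mono (hρ : IsStronglyLogConcaveFun s ρ) (hts : t ≤ s) : IsStronglyLogConcaveFun t ρ := by
  refine ⟨hρ.1, fun x y p q hp hq hpq => le_trans ?_ (hρ.2 x y p q hp hq hpq)⟩
  have := Real.rpow_nonneg (hρ.1 x) p
  have := Real.rpow_nonneg (hρ.1 y) q
  gcongr

lemma rpow_mul_rpow_le (hρ : IsStronglyLogConcaveFun 0 ρ) (x y : E) {p q : ℝ} (hp : 0 ≤ p)
    (hq : 0 ≤ q) (hpq : p + q = 1) : ρ x ^ p * ρ y ^ q ≤ ρ (p • x + q • y) := by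
  simpa using hρ.2 x y p q hp hq hpq

lemma exp_neg_sq_mul (hρ : IsStronglyLogConcaveFun s ρ) (t : ℝ) :
    IsStronglyLogConcaveFun (s + t) fun x => exp (-t * ‖x‖ ^ 2 / 2) * ρ x := by
  refine ⟨fun x => mul_nonneg (exp_pos _).le (hρ.1 x), fun x y p q hp hq hpq => ?_⟩
  calc (exp (-t * ‖x‖ ^ 2 / 2) * ρ x) ^ p * (exp (-t * ‖y‖ ^ 2 / 2) * ρ y) ^ q
        * exp (p * q * ((s + t) / 2) * ‖x - y‖ ^ 2)
      = exp (-t * ‖x‖ ^ 2 / 2 * p + -t * ‖y‖ ^ 2 / 2 * q + p * q * (t / 2) * ‖x - y‖ ^ 2)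
          * (ρ x ^ p * ρ y ^ q * exp (p * q * (s / 2) * ‖x - y‖ ^ 2)) := by
        rw [mul_rpow (exp_pos _).le (hρ.1 x), mul_rpow (exp_pos _).le (hρ.1 y), ← exp_mul,
          ← exp_mul, exp_add, exp_add,
          show p * q * ((s + t) / 2) * ‖x - y‖ ^ 2
            = p * q * (s / 2) * ‖x - y‖ ^ 2 + p * q * (t / 2) * ‖x - y‖ ^ 2 by ring, exp_add]
        ring
    _ = exp (-t * ‖p • x + q • y‖ ^ 2 / 2)
          * (ρ x ^ p * ρ y ^ q * exp (p * q * (s / 2) * ‖x - y‖ ^ 2)) := by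
        rw [norm_convex_combination_sq x y hpq]
        ring_nf
    _ ≤ exp (-t * ‖p • x + q • y‖ ^ 2 / 2) * ρ (p • x + q • y) := by
        gcongr
        exact hρ.2 x y p q hp hq hpq

lemma convex_setOf_pos (hρ : IsStronglyLogConcaveFun 0 ρ) : Convex ℝ {x | 0 < ρ x} := by
  intro x (hx : 0 < ρ x) y (hy : 0 < ρ y) p q hp hq hpq
  exact (show 0 < ρ x ^ p * ρ y ^ q by positivity).trans_le (hρ.rpow_mul_rpow_le x y hp hq hpq)

lemma concaveOn_log (hρ : IsStronglyLogConcaveFun 0 ρ) :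
    ConcaveOn ℝ {x | 0 < ρ x} fun x => log (ρ x) := by
  refine ⟨hρ.convex_setOf_pos, fun x (hx : 0 < ρ x) y (hy : 0 < ρ y) p q hp hq hpq => ?_⟩
  have h := log_le_log (by positivity) (hρ.rpow_mul_rpow_le x y hp hq hpq)
  rwa [log_mul (by positivity) (by positivity), log_rpow hx, log_rpow hy] at h

variable [FiniteDimensional ℝ E]

lemma continuousAt_of_mem_interior (hρ : IsStronglyLogConcaveFun 0 ρ) {x : E}
    (hx : x ∈ interior {x | 0 < ρ x}) : ContinuousAt ρ x := by
  have hlog : ContinuousAt (fun y => log (ρ y)) x :=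
    hρ.concaveOn_log.continuousOn_interior.continuousAt (isOpen_interior.mem_nhds hx)
  refine hlog.rexp.congr ?_
  filter_upwards [isOpen_interior.mem_nhds hx] with y hy
  have hpos : y ∈ {x | 0 < ρ x} := interior_subset hy
  exact exp_log hpos

variable [MeasurableSpace E] [BorelSpace E]

lemma ae_continuousAt (hρ : IsStronglyLogConcaveFun 0 ρ) : ∀ᵐ x, ContinuousAt ρ x := by
  have hfrontier : ∀ᵐ x, x ∉ frontier {x | 0 < ρ x} :=
    measure_eq_zero_iff_ae_notMem.1 (hρ.convex_setOf_pos.addHaar_frontier volume)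
  filter_upwards [hfrontier] with x hx
  by_cases hxi : x ∈ interior {x | 0 < ρ x}
  · exact hρ.continuousAt_of_mem_interior hxi
  · have hxc : x ∉ closure {x | 0 < ρ x} := fun h => hx ⟨h, hxi⟩
    refine (continuousAt_const (y := (0 : ℝ))).congr ?_
    filter_upwards [isClosed_closure.isOpen_compl.mem_nhds hxc] with y hy
    exact le_antisymm (hρ.1 y) (not_lt.1 fun h => hy (subset_closure h))

end IsStronglyLogConcaveFun

end LogConcavity

section Decay

lemma tendsto_setIntegral_ball_cobounded {F G : Type*} [NormedAddCommGroup F] [MeasurableSpace F]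
    [BorelSpace F] {μ : Measure F} [NormedAddCommGroup G] [NormedSpace ℝ G] {f : F → G}
    (hf : Integrable f μ) (r : ℝ) :
    Tendsto (fun z => ∫ y in ball z r, f y ∂μ) (Bornology.cobounded F) (𝓝 0) := by
  have : (Bornology.cobounded F).IsCountablyGenerated := by
    rw [← comap_norm_atTop]; infer_instance
  simp_rw [← integral_indicator measurableSet_ball]
  rw [← integral_zero F G (μ := μ)]
  refine tendsto_integral_filter_of_dominated_convergence (fun y => ‖f y‖)
    (.of_forall fun z => hf.aestronglyMeasurable.indicator measurableSet_ball)
    (.of_forall fun z => .of_forall fun y => norm_indicator_le_norm_self _ _) hf.norm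
    (.of_forall fun y => tendsto_const_nhds.congr' ?_)
  filter_upwards [tendsto_norm_cobounded_atTop.eventually_ge_atTop (r + ‖y‖)] with z hz
  refine (indicator_of_notMem (fun hy => ?_) f).symm
  have := norm_sub_norm_le z y
  rw [mem_ball, dist_eq_norm, norm_sub_rev] at hy
  linarith

namespace IsStronglyLogConcaveFun

variable {ρ : E → ℝ}

/- Every point of the ball around the midpoint is itself the midpoint of `x` and a point of
`ball x₀ r`. -/
lemma sqrt_mul_sqrt_le_of_mem_ball (hρ : IsStronglyLogConcaveFun 0 ρ) {x₀ : E} {r c : ℝ}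
    (hball : ∀ y ∈ ball x₀ r, c ≤ ρ y) (x : E) {y : E}
    (hy : y ∈ ball ((1 / 2 : ℝ) • (x + x₀)) (r / 2)) : √(ρ x) * √c ≤ ρ y := by
  have hmem : (2 : ℝ) • y - x ∈ ball x₀ r := by
    rw [mem_ball, dist_eq_norm] at hy ⊢
    rw [show (2 : ℝ) • y - x - x₀ = (2 : ℝ) • (y - (1 / 2 : ℝ) • (x + x₀)) by module, norm_smul,
      Real.norm_of_nonneg zero_le_two]
    linarith
  have h := hρ.rpow_mul_rpow_le x ((2 : ℝ) • y - x) (p := 1 / 2) (q := 1 / 2)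
    (by norm_num) (by norm_num) (by norm_num)
  rw [show (1 / 2 : ℝ) • x + (1 / 2 : ℝ) • ((2 : ℝ) • y - x) = y by module, ← sqrt_eq_rpow,
    ← sqrt_eq_rpow] at h
  refine le_trans ?_ h
  gcongr
  exact hball _ hmem

lemma le_mul_exp_neg_of_le_mul_exp_neg_one (hρ : IsStronglyLogConcaveFun 0 ρ) {x₀ : E} {c R : ℝ}
    (hc : 0 < c) (hcρ : c ≤ ρ x₀) (hR : 0 < R)
    (hfar : ∀ x, R ≤ ‖x - x₀‖ → ρ x ≤ c * exp (-1)) {x : E} (hx : R ≤ ‖x - x₀‖) :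
    ρ x ≤ c * exp (-(‖x - x₀‖ / R)) := by
  set d := ‖x - x₀‖
  have hd : 0 < d := hR.trans_le hx
  rcases (hρ.1 x).eq_or_lt with h0 | h0
  · rw [← h0]; positivity
  have hq : 0 ≤ 1 - R / d := by rw [sub_nonneg, div_le_one hd]; exact hx
  have hray : ρ ((1 - R / d) • x₀ + (R / d) • x) ≤ c * exp (-1) := by
    apply hfar
    rw [show (1 - R / d) • x₀ + (R / d) • x - x₀ = (R / d) • (x - x₀) by module, norm_smul,
      Real.norm_of_nonneg (by positivity), div_mul_cancel₀ _ hd.ne']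
  have hle : c ^ (1 - R / d) * ρ x ^ (R / d) ≤ c * exp (-1) :=
    calc c ^ (1 - R / d) * ρ x ^ (R / d) ≤ ρ x₀ ^ (1 - R / d) * ρ x ^ (R / d) := by gcongr
      _ ≤ _ := (hρ.rpow_mul_rpow_le x₀ x hq (by positivity) (by ring)).trans hray
  have hlog := log_le_log (by positivity) hle
  rw [log_mul (by positivity) (by positivity), log_rpow hc, log_rpow h0,
    log_mul hc.ne' (by positivity), log_exp] at hlog
  have hmul : (R / d) * (log (ρ x) - log c) ≤ -1 := by linarith
  have hlogx : log (ρ x) ≤ log c - d / R := by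
    have h := (le_div_iff₀' (by positivity : 0 < R / d)).2 hmul
    rw [show -1 / (R / d) = -(d / R) by field_simp] at h
    linarith
  rw [← exp_log hc, ← exp_add, ← sub_eq_add_neg, ← log_le_iff_le_exp h0]
  exact hlogx

variable [FiniteDimensional ℝ E] [MeasurableSpace E] [BorelSpace E]

lemma exists_forall_mem_ball_le (hρ : IsStronglyLogConcaveFun 0 ρ) (hI : ∫ x, ρ x ≠ 0) :
    ∃ (x₀ : E) (r c : ℝ), 0 < r ∧ 0 < c ∧ ∀ y ∈ ball x₀ r, c ≤ ρ y := by
  have hne : (interior {x | 0 < ρ x}).Nonempty := by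
    by_contra hempty
    have hnull : volume {x | 0 < ρ x} = 0 := by
      have h := hρ.convex_setOf_pos.addHaar_frontier volume
      rw [frontier, not_nonempty_iff_eq_empty.1 hempty, sdiff_empty] at h
      exact measure_mono_null subset_closure h
    refine hI (integral_eq_zero_of_ae ?_)
    filter_upwards [measure_eq_zero_iff_ae_notMem.1 hnull] with x hx
    exact le_antisymm (not_lt.1 hx) (hρ.1 x)
  obtain ⟨x₀, hx₀⟩ := hne
  have hpos : 0 < ρ x₀ := by
    have h : x₀ ∈ {x | 0 < ρ x} := interior_subset hx₀
    exact h
  obtain ⟨r, hr, hball⟩ := Metric.eventually_nhds_iff_ball.1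
    ((hρ.continuousAt_of_mem_interior hx₀).eventually (lt_mem_nhds (half_lt_self hpos)))
  exact ⟨x₀, r, ρ x₀ / 2, hr, half_pos hpos, fun y hy => (hball y hy).le⟩

lemma sqrt_mul_sqrt_mul_volume_le (hρ : IsStronglyLogConcaveFun 0 ρ) (hint : Integrable ρ)
    {x₀ : E} {r c : ℝ} (hball : ∀ y ∈ ball x₀ r, c ≤ ρ y) (x : E) :
    √(ρ x) * √c * volume.real (ball (0 : E) (r / 2)) ≤
      ∫ y in ball ((1 / 2 : ℝ) • (x + x₀)) (r / 2), ρ y := by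
  rw [Measure.real, ← Measure.addHaar_ball_center volume ((1 / 2 : ℝ) • (x + x₀))]
  exact setIntegral_ge_of_const_le_real measurableSet_ball measure_ball_lt_top.ne
    (fun y hy => hρ.sqrt_mul_sqrt_le_of_mem_ball hball x hy) hint.integrableOn

lemma bddAbove_range (hρ : IsStronglyLogConcaveFun 0 ρ) (hint : Integrable ρ)
    (hI : ∫ x, ρ x ≠ 0) : BddAbove (range ρ) := by
  obtain ⟨x₀, r, c, hr, hc, hball⟩ := hρ.exists_forall_mem_ball_le hI
  have hv : 0 < volume.real (ball (0 : E) (r / 2)) :=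
    ENNReal.toReal_pos (measure_ball_pos _ _ (half_pos hr)).ne' measure_ball_lt_top.ne
  refine ⟨((∫ x, ρ x) / (√c * volume.real (ball (0 : E) (r / 2)))) ^ 2, ?_⟩
  rintro _ ⟨x, rfl⟩
  refine (sqrt_le_left (div_nonneg (integral_nonneg hρ.1) (by positivity))).1 ?_
  rw [le_div_iff₀ (by positivity), ← mul_assoc]
  exact (hρ.sqrt_mul_sqrt_mul_volume_le hint hball x).trans
    (setIntegral_le_integral hint (.of_forall hρ.1))

lemma tendsto_cobounded (hρ : IsStronglyLogConcaveFun 0 ρ) (hint : Integrable ρ)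
    (hI : ∫ x, ρ x ≠ 0) : Tendsto ρ (Bornology.cobounded E) (𝓝 0) := by
  obtain ⟨x₀, r, c, hr, hc, hball⟩ := hρ.exists_forall_mem_ball_le hI
  set m : E → E := fun x => (1 / 2 : ℝ) • (x + x₀)
  set v := volume.real (ball (0 : E) (r / 2))
  have hv : 0 < v :=
    ENNReal.toReal_pos (measure_ball_pos _ _ (half_pos hr)).ne' measure_ball_lt_top.ne
  have hm : Tendsto m (Bornology.cobounded E) (Bornology.cobounded E) := by
    refine tendsto_norm_atTop_iff_cobounded.1 ?_
    simp_rw [m, norm_smul]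
    exact (tendsto_norm_cobounded_atTop.comp (tendsto_add_const_cobounded x₀)).const_mul_atTop
      (by norm_num)
  have hmass := (tendsto_setIntegral_ball_cobounded hint (r / 2)).comp hm
  have hbound : ∀ x, ρ x ≤ ((∫ y in ball (m x) (r / 2), ρ y) / (√c * v)) ^ 2 := fun x => by
    refine (sqrt_le_left (div_nonneg (integral_nonneg hρ.1) (by positivity))).1 ?_
    rw [le_div_iff₀ (by positivity), ← mul_assoc]
    exact hρ.sqrt_mul_sqrt_mul_volume_le hint hball x
  exact squeeze_zero hρ.1 hbound (by simpa using (hmass.div_const (√c * v)).pow 2)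

theorem exists_le_mul_exp_neg_norm (hρ : IsStronglyLogConcaveFun 0 ρ) (hint : Integrable ρ)
    (hI : ∫ x, ρ x ≠ 0) : ∃ C a : ℝ, 0 < a ∧ ∀ x, ρ x ≤ C * exp (-a * ‖x‖) := by
  obtain ⟨x₀, r, c, hr, hc, hball⟩ := hρ.exists_forall_mem_ball_le hI
  have hcρ : c ≤ ρ x₀ := hball x₀ (mem_ball_self hr)
  obtain ⟨M, hM⟩ := hρ.bddAbove_range hint hI
  have hcM : c ≤ M := hcρ.trans (hM (mem_range_self x₀))
  obtain ⟨R₀, -, hR₀⟩ := (hasBasis_cobounded_compl_closedBall x₀).eventually_iff.1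
    ((hρ.tendsto_cobounded hint hI).eventually (gt_mem_nhds (show 0 < c * exp (-1) by positivity)))
  set R := max R₀ 0 + 1
  have hR : 0 < R := by positivity
  have hfar : ∀ x, R ≤ ‖x - x₀‖ → ρ x ≤ c * exp (-1) := fun x hx => (@hR₀ x fun hmem => by
    have h := (mem_closedBall_iff_norm.1 hmem).trans (le_max_left R₀ 0)
    linarith).le
  have hρM : ∀ x, ρ x ≤ M * exp (1 - ‖x - x₀‖ / R) := fun x => by
    rcases le_total R ‖x - x₀‖ with hx | hx
    · refine (hρ.le_mul_exp_neg_of_le_mul_exp_neg_one hc hcρ hR hfar hx).trans ?_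
      gcongr
      · exact hc.le.trans hcM
      · linarith
    · refine (hM (mem_range_self x)).trans (le_mul_of_one_le_right (hc.le.trans hcM) ?_)
      exact one_le_exp (sub_nonneg.2 ((div_le_one hR).2 hx))
  refine ⟨M * exp (1 + ‖x₀‖ / R), 1 / R, by positivity, fun x => (hρM x).trans ?_⟩
  rw [mul_assoc, ← exp_add]
  have hx : ‖x‖ / R ≤ (‖x - x₀‖ + ‖x₀‖) / R := by
    gcongr
    simpa using norm_add_le (x - x₀) x₀
  rw [add_div] at hx
  have := hc.le.trans hcM
  gcongr
  rw [neg_mul, one_div_mul_eq_div]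
  linarith

end IsStronglyLogConcaveFun

end Decay

section SupConvolution

variable {F : Type*} [NormedAddCommGroup F]

/-- The sup-convolution of `ρ` with a Gaussian of variance `l`. In terms of `V = -log ρ` it is the
Moreau envelope: `-log (supConv ρ l x) = inf_y (V y + ‖x - y‖² / (2l))`. -/
def supConv (ρ : F → ℝ) (l : ℝ) (x : F) : ℝ :=
  ⨆ y, ρ y * exp (-(‖x - y‖ ^ 2 / (2 * l)))

/-- The weights for which `-log (supConv ρ l)` is a finite function. -/
structure IsBoundedWeight (ρ : F → ℝ) : Prop where
  nonneg : ∀ x, 0 ≤ ρ x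
  bddAbove : BddAbove (range ρ)
  exists_pos : ∃ y, 0 < ρ y

variable {ρ ρ' : F → ℝ} {l s C a : ℝ}

lemma mul_exp_neg_sq_le (hρ : ∀ x, 0 ≤ ρ x) (hl : 0 ≤ l) (x y : F) :
    ρ y * exp (-(‖x - y‖ ^ 2 / (2 * l))) ≤ ρ y :=
  mul_le_of_le_one_right (hρ y) (exp_le_one_iff.2 (neg_nonpos.2 (by positivity)))

lemma supConv_le_mul_exp_neg_norm (hl : 0 < l) (hC : ∀ x, ρ x ≤ C * exp (-a * ‖x‖)) (ha : 0 ≤ a)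
    (hC₀ : 0 ≤ C) (x : F) : supConv ρ l x ≤ C * exp (a ^ 2 * l / 2) * exp (-a * ‖x‖) := by
  refine ciSup_le fun y => ?_
  calc ρ y * exp (-(‖x - y‖ ^ 2 / (2 * l)))
      ≤ C * exp (-a * ‖y‖) * exp (-(‖x - y‖ ^ 2 / (2 * l))) := by gcongr; exact hC y
    _ = C * exp (-a * ‖y‖ + -(‖x - y‖ ^ 2 / (2 * l))) := by rw [exp_add]; ring
    _ ≤ C * exp (a ^ 2 * l / 2 + -a * ‖x‖) := by
        have htri : a * ‖x‖ ≤ a * (‖x - y‖ + ‖y‖) := by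
          gcongr
          simpa using norm_add_le (x - y) y
        have hsq : a * ‖x - y‖ ≤ a ^ 2 * l / 2 + ‖x - y‖ ^ 2 / (2 * l) := by
          have : 0 ≤ (a * l - ‖x - y‖) ^ 2 / (2 * l) := by positivity
          have e : (a * l - ‖x - y‖) ^ 2 / (2 * l)
              = a ^ 2 * l / 2 + ‖x - y‖ ^ 2 / (2 * l) - a * ‖x - y‖ := by field_simp; ring
          linarith
        refine mul_le_mul_of_nonneg_left (exp_le_exp.2 ?_) hC₀
        linarith
    _ = C * exp (a ^ 2 * l / 2) * exp (-a * ‖x‖) := by rw [exp_add]; ring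

namespace IsBoundedWeight

lemma bddAbove_range_mul_exp (hρ : IsBoundedWeight ρ) (hl : 0 ≤ l) (x : F) :
    BddAbove (range fun y => ρ y * exp (-(‖x - y‖ ^ 2 / (2 * l)))) :=
  hρ.bddAbove.range_mono _ fun y => mul_exp_neg_sq_le hρ.nonneg hl x y

lemma mul_exp_le_supConv (hρ : IsBoundedWeight ρ) (hl : 0 ≤ l) (x y : F) :
    ρ y * exp (-(‖x - y‖ ^ 2 / (2 * l))) ≤ supConv ρ l x :=
  le_ciSup (hρ.bddAbove_range_mul_exp hl x) y

lemma le_supConv (hρ : IsBoundedWeight ρ) (hl : 0 ≤ l) (x : F) : ρ x ≤ supConv ρ l x := by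
  simpa using hρ.mul_exp_le_supConv hl x x

lemma supConv_pos (hρ : IsBoundedWeight ρ) (hl : 0 ≤ l) (x : F) : 0 < supConv ρ l x := by
  obtain ⟨y, hy⟩ := hρ.exists_pos
  exact (by positivity : 0 < ρ y * exp (-(‖x - y‖ ^ 2 / (2 * l)))).trans_le
    (hρ.mul_exp_le_supConv hl x y)

lemma supConv_mono (hρ' : IsBoundedWeight ρ') (hl : 0 ≤ l) (hle : ∀ x, ρ x ≤ ρ' x) (x : F) :
    supConv ρ l x ≤ supConv ρ' l x :=
  ciSup_mono (hρ'.bddAbove_range_mul_exp hl x) fun y => by gcongr; exact hle y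

lemma log_sub_le_log_supConv (hρ : IsBoundedWeight ρ) (hl : 0 ≤ l) (x : F) {y : F}
    (hy : 0 < ρ y) : log (ρ y) - ‖x - y‖ ^ 2 / (2 * l) ≤ log (supConv ρ l x) := by
  have h := log_le_log (by positivity) (hρ.mul_exp_le_supConv hl x y)
  rwa [log_mul hy.ne' (exp_pos _).ne', log_exp] at h

lemma exists_log_supConv_sub_lt (hρ : IsBoundedWeight ρ) (hl : 0 ≤ l) (x : F) {η : ℝ}
    (hη : 0 < η) :
    ∃ y, 0 < ρ y ∧ log (supConv ρ l x) - η < log (ρ y) - ‖x - y‖ ^ 2 / (2 * l) := by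
  have hS := hρ.supConv_pos hl x
  obtain ⟨y, hy⟩ := exists_lt_of_lt_ciSup
    (mul_lt_of_lt_one_right hS (Real.exp_lt_one_iff.2 (neg_lt_zero.2 hη)) : _ < supConv ρ l x)
  have hpos : 0 < ρ y :=
    pos_of_mul_pos_left ((by positivity : (0 : ℝ) < supConv ρ l x * exp (-η)).trans hy)
      (exp_pos _).le
  refine ⟨y, hpos, ?_⟩
  have h := log_lt_log (by positivity) hy
  rwa [log_mul hS.ne' (exp_pos _).ne', log_mul hpos.ne' (exp_pos _).ne', log_exp, log_exp] at h

lemma strongConcaveOn_neg_log_supConv {ρ : E → ℝ} (hρ : IsBoundedWeight ρ)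
    (hl : 0 ≤ l) : StrongConcaveOn univ (-(1 / l)) fun x => -log (supConv ρ l x) := by
  refine ⟨convex_univ, fun x₁ _ x₂ _ p q hp hq hpq => le_of_forall_pos_le_add fun η hη => ?_⟩
  obtain ⟨y, hy, hlt⟩ := hρ.exists_log_supConv_sub_lt hl (p • x₁ + q • x₂) hη
  have h₁ := mul_le_mul_of_nonneg_left (hρ.log_sub_le_log_supConv hl x₁ hy) hp
  have h₂ := mul_le_mul_of_nonneg_left (hρ.log_sub_le_log_supConv hl x₂ hy) hq
  have hsq := norm_convex_combination_sq (x₁ - y) (x₂ - y) hpq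
  rw [sub_sub_sub_cancel_right, show p • (x₁ - y) + q • (x₂ - y) = p • x₁ + q • x₂ - (p + q) • y by
    module, hpq, one_smul] at hsq
  rw [hsq] at hlt
  simp only [smul_eq_mul]
  obtain rfl : q = 1 - p := by linarith
  ring_nf at hlt h₁ h₂ ⊢
  linarith

end IsBoundedWeight

/- The harmonic sum of the two moduli `s` and `1 / l` is `s / (1 + l * s)`. -/
lemma harmonic_modulus_mul_norm_sq_le (hs : 0 ≤ s) (hl : 0 < l) (u w : F) :
    s / (1 + l * s) * ‖u‖ ^ 2 ≤ s * ‖w‖ ^ 2 + ‖u - w‖ ^ 2 / l := by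
  have hu : ‖u‖ ≤ ‖w‖ + ‖u - w‖ := by simpa using norm_add_le w (u - w)
  calc s / (1 + l * s) * ‖u‖ ^ 2 ≤ s / (1 + l * s) * (‖w‖ + ‖u - w‖) ^ 2 := by gcongr
    _ = s * ‖w‖ ^ 2 + ‖u - w‖ ^ 2 / l - (l * s * ‖w‖ - ‖u - w‖) ^ 2 / (l * (1 + l * s)) := by
      field_simp; ring
    _ ≤ s * ‖w‖ ^ 2 + ‖u - w‖ ^ 2 / l := sub_le_self _ (by positivity)

lemma IsStronglyLogConcaveFun.strongConvexOn_neg_log_supConv {ρ : E → ℝ}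
    (hslc : IsStronglyLogConcaveFun s ρ) (hρ : IsBoundedWeight ρ) (hs : 0 ≤ s) (hl : 0 < l) :
    StrongConvexOn univ (s / (1 + l * s)) fun x => -log (supConv ρ l x) := by
  refine ⟨convex_univ, fun x₁ _ x₂ _ p q hp hq hpq => le_of_forall_pos_le_add fun η hη => ?_⟩
  obtain ⟨y₁, hy₁, hlt₁⟩ := hρ.exists_log_supConv_sub_lt hl.le x₁ hη
  obtain ⟨y₂, hy₂, hlt₂⟩ := hρ.exists_log_supConv_sub_lt hl.le x₂ hη
  have hle := hslc.2 y₁ y₂ p q hp hq hpq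
  have hpos : 0 < ρ (p • y₁ + q • y₂) := lt_of_lt_of_le (by positivity) hle
  have hlog := log_le_log (by positivity) hle
  rw [log_mul (by positivity) (exp_pos _).ne', log_mul (by positivity) (by positivity),
    log_rpow hy₁, log_rpow hy₂, log_exp] at hlog
  have hz := hρ.log_sub_le_log_supConv hl.le (p • x₁ + q • x₂) hpos
  have hsq := norm_convex_combination_sq (x₁ - y₁) (x₂ - y₂) hpq
  rw [show p • (x₁ - y₁) + q • (x₂ - y₂) = p • x₁ + q • x₂ - (p • y₁ + q • y₂) by module,
    show x₁ - y₁ - (x₂ - y₂) = x₁ - x₂ - (y₁ - y₂) by abel] at hsq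
  rw [hsq] at hz
  have hmod := mul_le_mul_of_nonneg_left
    (harmonic_modulus_mul_norm_sq_le hs hl (x₁ - x₂) (y₁ - y₂)) (mul_nonneg hp hq)
  have h₁ := mul_le_mul_of_nonneg_left hlt₁.le hp
  have h₂ := mul_le_mul_of_nonneg_left hlt₂.le hq
  simp only [smul_eq_mul]
  generalize s / (1 + l * s) = m at hmod ⊢
  obtain rfl : q = 1 - p := by linarith
  ring_nf at hz hmod hlog h₁ h₂ ⊢
  linarith

lemma IsBoundedWeight.tendsto_supConv (hρ : IsBoundedWeight ρ) {x : F} (hx : ContinuousAt ρ x) :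
    Tendsto (fun l => supConv ρ l x) (𝓝[>] 0) (𝓝 (ρ x)) := by
  refine tendsto_order.2 ⟨fun b hb => ?_, fun b hb => ?_⟩
  · filter_upwards [self_mem_nhdsWithin] with l hl
    exact hb.trans_le (hρ.le_supConv (mem_Ioi.1 hl).le x)
  obtain ⟨b', hb₁, hb₂⟩ := exists_between hb
  obtain ⟨δ, hδ, hball⟩ := Metric.eventually_nhds_iff.1 (hx.eventually (gt_mem_nhds hb₁))
  obtain ⟨C, hC⟩ := hρ.bddAbove
  have htail : Tendsto (fun l : ℝ => C * exp (-(δ ^ 2 / (2 * l)))) (𝓝[>] 0) (𝓝 0) := by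
    suffices h : Tendsto _ _ (𝓝 (C * 0)) by simpa only [mul_zero] using h
    refine (tendsto_exp_atBot.comp (tendsto_neg_atTop_atBot.comp ?_)).const_mul C
    simp_rw [div_mul_eq_div_div, div_eq_mul_inv]
    exact tendsto_inv_nhdsGT_zero.const_mul_atTop (by positivity)
  filter_upwards [self_mem_nhdsWithin, htail.eventually (gt_mem_nhds ((hρ.nonneg x).trans_lt hb₁))]
    with l hl hlt
  have hl₀ : 0 < l := hl
  refine (ciSup_le fun y => ?_ : supConv ρ l x ≤ b').trans_lt hb₂
  rcases lt_or_ge (dist y x) δ with hy | hy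
  · exact (mul_exp_neg_sq_le hρ.nonneg hl₀.le x y).trans (hball hy).le
  · rw [dist_comm, dist_eq_norm] at hy
    refine le_trans ?_ hlt.le
    have := (hρ.nonneg y).trans (hC (mem_range_self y))
    gcongr
    exact hC (mem_range_self y)

end SupConvolution

section StrongConvexity

/-- Polynomial growth at infinity. -/
def HasPolyGrowth {F G : Type*} [Norm F] [Norm G] (f : F → G) : Prop :=
  ∃ (k : ℕ) (C : ℝ), ∀ x, ‖f x‖ ≤ C * (1 + ‖x‖) ^ k

variable {φ : E → ℝ} {m M : ℝ}

lemma exists_neg_mul_one_add_norm_le_of_convexOn {F : Type*} [NormedAddCommGroup F]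
    [NormedSpace ℝ F] [FiniteDimensional ℝ F] {φ : F → ℝ} (hφ : ConvexOn ℝ univ φ) :
    ∃ A : ℝ, 0 ≤ A ∧ ∀ x, -(A * (1 + ‖x‖)) ≤ φ x := by
  obtain ⟨L, c, hle, -⟩ := hφ.exists_affine_le_of_lt (𝕜 := ℝ) (mem_univ 0) (sub_one_lt (φ 0))
    isClosed_univ
    (hφ.locallyLipschitz.continuous.lowerSemicontinuous.lowerSemicontinuousOn univ)
  refine ⟨‖L‖ + |c|, by positivity, fun x => le_trans ?_ (hle ⟨x, mem_univ x⟩)⟩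
  have hL := (abs_le.1 (L.le_opNorm x)).1
  have hc := neg_abs_le c
  have := mul_nonneg (abs_nonneg c) (norm_nonneg x)
  have := norm_nonneg L
  change -((‖L‖ + |c|) * (1 + ‖x‖)) ≤ L x + c
  linarith

lemma two_mul_add_le_of_strongConvexOn (hφ : StrongConvexOn univ m φ) (x v : E) :
    2 * φ x + m * ‖v‖ ^ 2 ≤ φ (x + v) + φ (x - v) := by
  have h := hφ.2 (mem_univ (x + v)) (mem_univ (x - v)) one_half_pos.le one_half_pos.le
    (add_halves 1)
  have hmid : (1 / 2 : ℝ) • (x + v) + (1 / 2 : ℝ) • (x - v) = x := by module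
  have hdiff : x + v - (x - v) = (2 : ℝ) • v := by module
  simp only [hmid, hdiff, norm_smul, Real.norm_ofNat, smul_eq_mul] at h
  linarith

lemma continuous_of_strongConvexOn [FiniteDimensional ℝ E] (hφ : StrongConvexOn univ m φ) :
    Continuous φ := by
  have hsq : Continuous fun x : E => m / 2 * ‖x‖ ^ 2 := by fun_prop
  have h := (strongConvexOn_iff_convex.1 hφ).locallyLipschitz.continuous.add hsq
  rwa [show (fun x => φ x - m / 2 * ‖x‖ ^ 2) + (fun x => m / 2 * ‖x‖ ^ 2) = φ from
    sub_add_cancel φ _] at h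

lemma exists_sq_sub_mul_le_of_strongConvexOn [FiniteDimensional ℝ E]
    (hφ : StrongConvexOn univ m φ) :
    ∃ A : ℝ, 0 ≤ A ∧ ∀ x, m / 2 * ‖x‖ ^ 2 - A * (1 + ‖x‖) ≤ φ x := by
  obtain ⟨A, hA, hle⟩ :=
    exists_neg_mul_one_add_norm_le_of_convexOn (strongConvexOn_iff_convex.1 hφ)
  exact ⟨A, hA, fun x => by linarith [hle x]⟩

lemma bddBelow_range_of_strongConvexOn [FiniteDimensional ℝ E] (hφ : StrongConvexOn univ m φ)
    (hm : 0 < m) : BddBelow (range φ) := by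
  obtain ⟨A, -, hle⟩ := exists_sq_sub_mul_le_of_strongConvexOn hφ
  refine ⟨-A - A ^ 2 / (2 * m), ?_⟩
  rintro _ ⟨x, rfl⟩
  refine le_trans ?_ (hle x)
  have hsq : 0 ≤ (m * ‖x‖ - A) ^ 2 / (2 * m) := by positivity
  have e : (m * ‖x‖ - A) ^ 2 / (2 * m) = m / 2 * ‖x‖ ^ 2 - A * ‖x‖ + A ^ 2 / (2 * m) := by
    field_simp; ring
  linarith

lemma hasPolyGrowth_of_strongConvexOn_of_strongConcaveOn [FiniteDimensional ℝ E]
    (hm : StrongConvexOn univ m φ) (hM : StrongConcaveOn univ M φ) : HasPolyGrowth φ := by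
  obtain ⟨A, hA, hlow⟩ := exists_sq_sub_mul_le_of_strongConvexOn hm
  obtain ⟨B, hB, hupp⟩ := exists_neg_mul_one_add_norm_le_of_convexOn
    (strongConcaveOn_iff_convex.1 hM).neg
  refine ⟨2, |m| / 2 + |M| / 2 + A + B, fun x => ?_⟩
  have h₁ : m / 2 * ‖x‖ ^ 2 - A * (1 + ‖x‖) ≤ φ x := hlow x
  have h₂ : -(B * (1 + ‖x‖)) ≤ -(φ x + M / 2 * ‖x‖ ^ 2) := hupp x
  have hlin : 1 + ‖x‖ ≤ (1 + ‖x‖) ^ 2 := by nlinarith [norm_nonneg x]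
  have hsq : ‖x‖ ^ 2 ≤ (1 + ‖x‖) ^ 2 := by gcongr; linarith
  have hquad : ∀ K : ℝ, |K / 2 * ‖x‖ ^ 2| ≤ |K| / 2 * (1 + ‖x‖) ^ 2 := fun K => by
    rw [abs_mul, abs_div, abs_two, abs_of_nonneg (sq_nonneg ‖x‖)]
    gcongr
  have hm' := (abs_le.1 (hquad m)).1
  have hM' := (abs_le.1 (hquad M)).1
  have hA' := mul_le_mul_of_nonneg_left hlin hA
  have hB' := mul_le_mul_of_nonneg_left hlin hB
  have := mul_nonneg (abs_nonneg m) (sq_nonneg (1 + ‖x‖))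
  have := mul_nonneg (abs_nonneg M) (sq_nonneg (1 + ‖x‖))
  have := mul_nonneg hA (sq_nonneg (1 + ‖x‖))
  have := mul_nonneg hB (sq_nonneg (1 + ‖x‖))
  rw [Real.norm_eq_abs, abs_le]
  constructor <;> linarith

lemma le_iteratedFDeriv_two_of_strongConvexOn (hφ : ContDiff ℝ 2 φ) (hm : StrongConvexOn univ m φ)
    (x v : E) : m * ‖v‖ ^ 2 ≤ iteratedFDeriv ℝ 2 φ x ![v, v] := by
  set D : ℝ → ℝ := fun τ => fderiv ℝ φ (x + τ • v) v - m * inner ℝ (x + τ • v) v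
  have hline : ∀ τ : ℝ, HasDerivAt (fun τ : ℝ => x + τ • v) v τ := fun τ => by
    simpa using ((hasDerivAt_id τ).smul_const v).const_add x
  have hderiv : ∀ τ, HasDerivAt (fun τ : ℝ => φ (x + τ • v) - m / 2 * ‖x + τ • v‖ ^ 2) (D τ) τ := by
    intro τ
    have hφ' := (hφ.differentiable two_ne_zero (x + τ • v)).hasFDerivAt.comp_hasDerivAt τ (hline τ)
    exact (hφ'.sub ((hline τ).norm_sq.const_mul (m / 2))).congr_deriv (by simp only [D]; ring)
  have hconv : ConvexOn ℝ univ fun τ : ℝ => φ (x + τ • v) - m / 2 * ‖x + τ • v‖ ^ 2 := by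
    have hcomp : (fun τ : ℝ => φ (x + τ • v) - m / 2 * ‖x + τ • v‖ ^ 2) =
        (fun z => φ z - m / 2 * ‖z‖ ^ 2) ∘ AffineMap.lineMap (k := ℝ) x (x + v) := by
      ext τ
      simp [AffineMap.lineMap_apply, add_comm]
    rw [hcomp]
    exact (strongConvexOn_iff_convex.1 hm).comp_affineMap (AffineMap.lineMap x (x + v))
  have hmono : Monotone D := by
    have h := hconv.monotoneOn_deriv fun τ _ => (hderiv τ).differentiableAt
    rwa [monotoneOn_univ, funext fun τ => (hderiv τ).deriv] at h
  have hφ'' : HasDerivAt (fun τ : ℝ => fderiv ℝ φ (x + τ • v) v)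
      (iteratedFDeriv ℝ 2 φ x ![v, v]) 0 := by
    have h : HasFDerivAt (fderiv ℝ φ) (fderiv ℝ (fderiv ℝ φ) x) (x + (0 : ℝ) • v) := by
      rw [zero_smul, add_zero]
      exact ((hφ.fderiv_right (m := 1) le_rfl).differentiable one_ne_zero x).hasFDerivAt
    have h' : HasDerivAt (fun τ : ℝ => fderiv ℝ φ (x + τ • v)) (fderiv ℝ (fderiv ℝ φ) x v) 0 :=
      h.comp_hasDerivAt (0 : ℝ) (hline 0)
    simpa [iteratedFDeriv_two_apply] using h'.clm_apply (hasDerivAt_const (0 : ℝ) v)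
  have hinner : HasDerivAt (fun τ : ℝ => m * inner ℝ (x + τ • v) v) (m * ‖v‖ ^ 2) 0 := by
    simpa [real_inner_self_eq_norm_sq] using
      ((hline 0).inner ℝ (hasDerivAt_const (0 : ℝ) v)).const_mul m
  exact sub_nonneg.1 ((hφ''.sub hinner).nonneg_of_monotone hmono)

end StrongConvexity

section Mollification

variable [FiniteDimensional ℝ E] [MeasurableSpace E] [BorelSpace E]
  {φ : E → ℝ} {m M : ℝ} {b : ContDiffBump (0 : E)}

/-- The regularization of `φ` by convolution with the normalized bump function `b`. -/
def mollify (φ : E → ℝ) (b : ContDiffBump (0 : E)) : E → ℝ :=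
  φ ⋆[ContinuousLinearMap.lsmul ℝ ℝ, volume] b.normed volume

lemma mollify_eq_integral_sub (φ : E → ℝ) (b : ContDiffBump (0 : E)) (x : E) :
    mollify φ b x = ∫ t, φ (x - t) * b.normed volume t :=
  convolution_lsmul_swap

lemma mollify_eq_integral_add (φ : E → ℝ) (b : ContDiffBump (0 : E)) (x : E) :
    mollify φ b x = ∫ t, φ (x + t) * b.normed volume t := by
  rw [mollify_eq_integral_sub, ← integral_neg_eq_self]
  simp [ContDiffBump.normed_neg]

lemma mollify_neg (φ : E → ℝ) (b : ContDiffBump (0 : E)) : mollify (-φ) b = -mollify φ b := by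
  ext x
  simp [mollify_eq_integral_sub, integral_neg]

lemma integrable_mul_normed {ψ : E → ℝ} (hψ : Continuous ψ) (b : ContDiffBump (0 : E)) :
    Integrable fun t => ψ t * b.normed volume t :=
  (hψ.mul b.continuous_normed).integrable_of_hasCompactSupport b.hasCompactSupport_normed.mul_left

lemma strongConvexOn_mollify (hφ : StrongConvexOn univ m φ) (b : ContDiffBump (0 : E)) :
    StrongConvexOn univ m (mollify φ b) := by
  refine ⟨convex_univ, fun x _ y _ p q hp hq hpq => ?_⟩
  have hc := continuous_of_strongConvexOn hφ
  have hint : ∀ z, Integrable fun t => φ (z - t) * b.normed volume t := fun z =>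
    integrable_mul_normed (hc.comp (continuous_const.sub continuous_id)) b
  have hpt : ∀ t, φ (p • x + q • y - t) * b.normed volume t ≤
      p * (φ (x - t) * b.normed volume t) + q * (φ (y - t) * b.normed volume t)
        - p * q * (m / 2 * ‖x - y‖ ^ 2) * b.normed volume t := by
    intro t
    have h := hφ.2 (mem_univ (x - t)) (mem_univ (y - t)) hp hq hpq
    have hcomb : p • (x - t) + q • (y - t) = p • x + q • y - t := by
      rw [smul_sub, smul_sub, sub_add_sub_comm, ← add_smul, hpq, one_smul]
    rw [hcomb, sub_sub_sub_cancel_right, smul_eq_mul, smul_eq_mul] at h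
    exact (mul_le_mul_of_nonneg_right h (b.nonneg_normed t)).trans_eq (by ring)
  have h := integral_mono (hint (p • x + q • y))
    ((((hint x).const_mul p).add ((hint y).const_mul q)).sub (b.integrable_normed.const_mul _)) hpt
  rw [integral_sub' (((hint x).const_mul p).add ((hint y).const_mul q))
    (b.integrable_normed.const_mul _), integral_add' ((hint x).const_mul p) ((hint y).const_mul q),
    integral_const_mul, integral_const_mul, integral_const_mul, b.integral_normed, mul_one] at h
  simpa only [mollify_eq_integral_sub, smul_eq_mul] using h

lemma strongConcaveOn_mollify (hφ : StrongConcaveOn univ M φ) (b : ContDiffBump (0 : E)) :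
    StrongConcaveOn univ M (mollify φ b) := by
  have h := (strongConvexOn_mollify hφ.neg b).neg
  rwa [mollify_neg, neg_neg] at h

lemma add_le_mollify (hφ : StrongConvexOn univ m φ) (hm : m ≤ 0) (b : ContDiffBump (0 : E))
    (x : E) : φ x + m / 2 * b.rOut ^ 2 ≤ mollify φ b x := by
  have hc := continuous_of_strongConvexOn hφ
  have hadd : Integrable fun t => φ (x + t) * b.normed volume t :=
    integrable_mul_normed (hc.comp (continuous_const.add continuous_id)) b
  have hsub : Integrable fun t => φ (x - t) * b.normed volume t :=
    integrable_mul_normed (hc.comp (continuous_const.sub continuous_id)) b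
  have hpt : ∀ t, (2 * φ x + m * b.rOut ^ 2) * b.normed volume t ≤
      φ (x + t) * b.normed volume t + φ (x - t) * b.normed volume t := by
    intro t
    by_cases ht : t ∈ ball (0 : E) b.rOut
    · have hsq : ‖t‖ ^ 2 ≤ b.rOut ^ 2 := by
        gcongr
        exact (mem_ball_zero_iff.1 ht).le
      rw [← add_mul]
      have := two_mul_add_le_of_strongConvexOn hφ x t
      have := mul_le_mul_of_nonpos_left hsq hm
      exact mul_le_mul_of_nonneg_right (by linarith) (b.nonneg_normed t)
    · rw [← b.support_normed_eq (μ := volume), Function.notMem_support] at ht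
      simp [ht]
  have h := integral_mono (b.integrable_normed.const_mul _) (hadd.add hsub) hpt
  rw [integral_add' hadd hsub, ← mollify_eq_integral_add, ← mollify_eq_integral_sub,
    integral_const_mul, b.integral_normed] at h
  linarith

lemma mollify_le_sub (hφ : StrongConcaveOn univ M φ) (hM : M ≤ 0) (b : ContDiffBump (0 : E))
    (x : E) : mollify φ b x ≤ φ x - M / 2 * b.rOut ^ 2 := by
  have h := add_le_mollify hφ.neg hM b x
  rw [mollify_neg, Pi.neg_apply, Pi.neg_apply] at h
  linarith

lemma HasPolyGrowth.convolution {F : Type*} [NormedAddCommGroup F] [NormedSpace ℝ F]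
    (hφ : HasPolyGrowth φ) {g : E → F} (hg : Continuous g) (hgc : HasCompactSupport g) :
    HasPolyGrowth (φ ⋆[ContinuousLinearMap.lsmul ℝ ℝ, volume] g) := by
  obtain ⟨k, C, hC⟩ := hφ
  have hC₀ : 0 ≤ C := by simpa using (norm_nonneg _).trans (hC 0)
  have hint : Integrable fun t : E => (1 + ‖t‖) ^ k * ‖g t‖ :=
    Continuous.integrable_of_hasCompactSupport (by fun_prop) hgc.norm.mul_left
  refine ⟨k, C * ∫ t, (1 + ‖t‖) ^ k * ‖g t‖, fun x => ?_⟩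
  have hpt : ∀ t, ‖φ (x - t) • g t‖ ≤ C * (1 + ‖x‖) ^ k * ((1 + ‖t‖) ^ k * ‖g t‖) := by
    intro t
    have hx := norm_nonneg x
    have ht := norm_nonneg t
    have hsub : 1 + ‖x - t‖ ≤ (1 + ‖x‖) * (1 + ‖t‖) := by nlinarith [norm_sub_le x t]
    calc ‖φ (x - t) • g t‖ = ‖φ (x - t)‖ * ‖g t‖ := norm_smul _ _
      _ ≤ C * ((1 + ‖x‖) * (1 + ‖t‖)) ^ k * ‖g t‖ := by
        gcongr
        exact (hC _).trans (by gcongr)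
      _ = C * (1 + ‖x‖) ^ k * ((1 + ‖t‖) ^ k * ‖g t‖) := by
        rw [mul_pow]
        ring
  rw [convolution_lsmul_swap]
  refine (norm_integral_le_of_norm_le (hint.const_mul _) (Eventually.of_forall hpt)).trans_eq ?_
  rw [integral_const_mul]
  ring

lemma fderiv_convolution_lsmul {F : Type*} [NormedAddCommGroup F] [NormedSpace ℝ F]
    (hφ : Continuous φ) {g : E → F} (hg : ContDiff ℝ 1 g) (hgc : HasCompactSupport g) :
    fderiv ℝ (φ ⋆[ContinuousLinearMap.lsmul ℝ ℝ, volume] g) =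
      φ ⋆[ContinuousLinearMap.lsmul ℝ ℝ, volume] fderiv ℝ g :=
  funext fun x => (hgc.hasFDerivAt_convolution_right (ContinuousLinearMap.lsmul ℝ ℝ)
    hφ.locallyIntegrable hg x).fderiv

-- `F` lies in the universe of `E` so that the induction can pass from `F` to `E →L[ℝ] F`.
lemma hasPolyGrowth_iteratedFDeriv_convolution (hφ : Continuous φ) (hφ' : HasPolyGrowth φ)
    (k : ℕ) : ∀ {F : Type u} [NormedAddCommGroup F] [NormedSpace ℝ F] {g : E → F},
      ContDiff ℝ ∞ g → HasCompactSupport g →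
      HasPolyGrowth (iteratedFDeriv ℝ k (φ ⋆[ContinuousLinearMap.lsmul ℝ ℝ, volume] g)) := by
  induction k with
  | zero =>
    intro F _ _ g hg hgc
    simpa only [HasPolyGrowth, norm_iteratedFDeriv_zero] using hφ'.convolution hg.continuous hgc
  | succ k ih =>
    intro F _ _ g hg hgc
    simp only [HasPolyGrowth, ← norm_iteratedFDeriv_fderiv]
    rw [fderiv_convolution_lsmul hφ (hg.of_le (mod_cast le_top)) hgc]
    have hgc' : HasCompactSupport (fderiv ℝ g) := hgc.fderiv ℝ
    exact ih (F := E →L[ℝ] F) (hg.fderiv_right (m := ∞) (by simp)) hgc'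

lemma hasTemperateGrowth_mollify (hφ : Continuous φ) (hφ' : HasPolyGrowth φ)
    (b : ContDiffBump (0 : E)) : (mollify φ b).HasTemperateGrowth := by
  have hb : ContDiff ℝ ∞ (b.normed volume) := b.contDiff_normed
  have hbc : HasCompactSupport (b.normed volume) := b.hasCompactSupport_normed
  obtain ⟨k, C, hC⟩ : HasPolyGrowth (mollify φ b) := hφ'.convolution hb.continuous hbc
  have hsmooth : ContDiff ℝ ∞ (mollify φ b) :=
    hbc.contDiff_convolution_right _ hφ.locallyIntegrable hb
  refine Function.HasTemperateGrowth.of_fderiv ⟨hsmooth.fderiv_right (m := ∞) (by simp),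
    fun j => ?_⟩ (hsmooth.differentiable (by simp)) hC
  rw [mollify, fderiv_convolution_lsmul hφ (hb.of_le (mod_cast le_top)) hbc]
  have hbc' : HasCompactSupport (fderiv ℝ (b.normed volume)) := hbc.fderiv ℝ
  exact hasPolyGrowth_iteratedFDeriv_convolution hφ hφ' j (hb.fderiv_right (m := ∞) (by simp)) hbc'

end Mollification

section Gibbs

variable [FiniteDimensional ℝ E] [MeasurableSpace E] [BorelSpace E] {ψ : E → ℝ}

/-- The measure with density `exp (-ψ)`. -/
def gibbsMeasure (ψ : E → ℝ) : Measure E :=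
  volume.withDensity fun x => ENNReal.ofReal (exp (-ψ x))

/-- The potential `ψ` shifted by the constant that makes `gibbsMeasure ψ` a probability measure. -/
def normalize (ψ : E → ℝ) (x : E) : ℝ := ψ x + log (∫ y, exp (-ψ y))

lemma integral_withDensity_ofReal {α : Type*} [MeasurableSpace α] {μ : Measure α} {p : α → ℝ}
    (hp : AEMeasurable p μ) (hp₀ : ∀ x, 0 ≤ p x) (F : α → ℝ) :
    ∫ x, F x ∂μ.withDensity (fun x => ENNReal.ofReal (p x)) = ∫ x, F x * p x ∂μ := by
  rw [integral_withDensity_eq_integral_toReal_smul₀ hp.ennreal_ofReal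
    (ae_of_all _ fun x => ENNReal.ofReal_lt_top)]
  simp only [ENNReal.toReal_ofReal (hp₀ _), smul_eq_mul, mul_comm]

lemma exp_neg_normalize (hψ : Integrable fun x => exp (-ψ x)) (x : E) :
    exp (-normalize ψ x) = exp (-ψ x) / ∫ y, exp (-ψ y) := by
  rw [normalize, neg_add, ← sub_eq_add_neg, Real.exp_sub, Real.exp_log (integral_exp_pos hψ)]

lemma integral_exp_neg_normalize (hψ : Integrable fun x => exp (-ψ x)) :
    ∫ x, exp (-normalize ψ x) = 1 := by
  simp only [exp_neg_normalize hψ, integral_div]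
  exact div_self (integral_exp_pos hψ).ne'

lemma isProbabilityMeasure_gibbsMeasure (h : ∫ x, exp (-ψ x) = 1) :
    IsProbabilityMeasure (gibbsMeasure ψ) := by
  refine ⟨?_⟩
  rw [gibbsMeasure, withDensity_apply _ MeasurableSet.univ, Measure.restrict_univ,
    ← ofReal_integral_eq_lintegral_ofReal (integrable_of_integral_eq_one h)
      (ae_of_all _ fun x => (exp_pos _).le), h, ENNReal.ofReal_one]

lemma integral_gibbsMeasure_normalize (hψ : Continuous ψ) (hψ' : Integrable fun x => exp (-ψ x))
    (F : E → ℝ) :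
    ∫ x, F x ∂gibbsMeasure (normalize ψ) = (∫ x, F x * exp (-ψ x)) / ∫ x, exp (-ψ x) := by
  have hc : Continuous (normalize ψ) := hψ.add continuous_const
  rw [gibbsMeasure, integral_withDensity_ofReal (by fun_prop) fun x => (exp_pos _).le,
    ← integral_div]
  simp only [exp_neg_normalize hψ', mul_div_assoc]

lemma integrable_one_add_norm_pow_mul_exp_neg (k : ℕ) {a : ℝ} (ha : 0 < a) :
    Integrable fun x : E => (1 + ‖x‖) ^ k * exp (-a * ‖x‖) := by
  set d := Module.finrank ℝ E + 1
  have hint : Integrable fun x : E => (1 + ‖x‖) ^ (-(d : ℝ)) :=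
    integrable_one_add_norm (by simp [d])
  refine (hint.const_mul ((k + d).factorial * exp a / a ^ (k + d))).mono'
    (Continuous.aestronglyMeasurable (by fun_prop)) (ae_of_all _ fun x => ?_)
  have hpow := Real.pow_div_factorial_le_exp (a * (1 + ‖x‖)) (by positivity) (k + d)
  rw [mul_pow, div_le_iff₀ (by positivity)] at hpow
  rw [Real.norm_of_nonneg (by positivity), Real.rpow_neg (by positivity), Real.rpow_natCast,
    ← div_eq_mul_inv, div_div, le_div_iff₀ (by positivity)]
  have hexp : exp (-a * ‖x‖) * exp (a * (1 + ‖x‖)) = exp a := by rw [← Real.exp_add]; ring_nf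
  calc (1 + ‖x‖) ^ k * exp (-a * ‖x‖) * (a ^ (k + d) * (1 + ‖x‖) ^ d)
      = a ^ (k + d) * (1 + ‖x‖) ^ (k + d) * exp (-a * ‖x‖) := by ring
    _ ≤ exp (a * (1 + ‖x‖)) * (k + d).factorial * exp (-a * ‖x‖) := by gcongr
    _ = (k + d).factorial * exp a := by rw [← hexp]; ring

lemma tendsto_integral_mul_of_le_mul_exp_neg {ι : Type*} {L : Filter ι} [L.IsCountablyGenerated]
    {p : ι → E → ℝ} {ρ F : E → ℝ} {C a : ℝ} (ha : 0 < a)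
    (hp : ∀ i, AEStronglyMeasurable (p i)) (hp₀ : ∀ i x, 0 ≤ p i x)
    (hle : ∀ᶠ i in L, ∀ x, p i x ≤ C * exp (-a * ‖x‖))
    (hlim : ∀ᵐ x, Tendsto (fun i => p i x) L (𝓝 (ρ x)))
    (hF : AEStronglyMeasurable F) (hF' : HasPolyGrowth F) :
    Tendsto (fun i => ∫ x, F x * p i x) L (𝓝 (∫ x, F x * ρ x)) := by
  obtain ⟨k, K, hK⟩ := hF'
  refine tendsto_integral_filter_of_dominated_convergence
    (fun x => K * C * ((1 + ‖x‖) ^ k * exp (-a * ‖x‖)))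
    (Eventually.of_forall fun i => hF.mul (hp i))
    (hle.mono fun i hi => ae_of_all _ fun x => ?_)
    ((integrable_one_add_norm_pow_mul_exp_neg k ha).const_mul (K * C))
    (hlim.mono fun x hx => hx.const_mul _)
  rw [norm_mul, Real.norm_of_nonneg (hp₀ i x)]
  calc ‖F x‖ * p i x ≤ K * (1 + ‖x‖) ^ k * (C * exp (-a * ‖x‖)) :=
        mul_le_mul (hK x) (hi x) (hp₀ i x) ((norm_nonneg _).trans (hK x))
    _ = K * C * ((1 + ‖x‖) ^ k * exp (-a * ‖x‖)) := by ring

end Gibbs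

section GaussTilt

/-- The weight `ρ` multiplied by a Gaussian factor of inverse variance `l`. -/
def gaussTilt {F : Type*} [NormedAddCommGroup F] (l : ℝ) (ρ : F → ℝ) (x : F) : ℝ :=
  exp (-l * ‖x‖ ^ 2 / 2) * ρ x

lemma IsBoundedWeight.gaussTilt_le {F : Type*} [NormedAddCommGroup F] {ρ : F → ℝ} {l : ℝ}
    (hρ : IsBoundedWeight ρ) (hl : 0 ≤ l) (x : F) : gaussTilt l ρ x ≤ ρ x :=
  mul_le_of_le_one_left (hρ.nonneg x) (exp_le_one_iff.2 (by nlinarith [sq_nonneg ‖x‖]))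

lemma isBoundedWeight_gaussTilt {F : Type*} [NormedAddCommGroup F] {ρ : F → ℝ} {l : ℝ}
    (hρ : IsBoundedWeight ρ) (hl : 0 ≤ l) : IsBoundedWeight (gaussTilt l ρ) where
  nonneg x := mul_nonneg (exp_pos _).le (hρ.nonneg x)
  bddAbove := hρ.bddAbove.range_mono _ (hρ.gaussTilt_le hl)
  exists_pos := hρ.exists_pos.imp fun _ hy => mul_pos (exp_pos _) hy

variable {ρ : E → ℝ} {s l : ℝ}

namespace IsStronglyLogConcaveFun

lemma strongConvexOn_neg_log_supConv_gaussTilt (hslc : IsStronglyLogConcaveFun s ρ)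
    (hρ : IsBoundedWeight ρ) (hs : 0 ≤ s) (hl : 0 < l) :
    StrongConvexOn univ ((s + l) / (1 + l * (s + l)))
      fun x => -log (supConv (gaussTilt l ρ) l x) :=
  (hslc.exp_neg_sq_mul l).strongConvexOn_neg_log_supConv (isBoundedWeight_gaussTilt hρ hl.le)
    (by positivity) hl

lemma convexOn_neg_log_supConv_gaussTilt (hslc : IsStronglyLogConcaveFun 0 ρ)
    (hρ : IsBoundedWeight ρ) (hl : 0 < l) :
    StrongConvexOn univ 0 fun x => -log (supConv (gaussTilt l ρ) l x) :=
  (hslc.strongConvexOn_neg_log_supConv_gaussTilt hρ le_rfl hl).mono (by positivity)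

end IsStronglyLogConcaveFun

end GaussTilt

section Approximation

variable [FiniteDimensional ℝ E] [MeasurableSpace E] [BorelSpace E] {ρ : E → ℝ} {s : ℝ}

/-- The smooth potential whose Gibbs measure approximates the density `ρ`. The single scale
`l = b.rOut` is used for the Gaussian tilt, which makes the potential strongly convex, for the
Moreau regularization, which bounds its Hessian from above, and for the mollification. -/
def approxPotential (ρ : E → ℝ) (b : ContDiffBump (0 : E)) : E → ℝ :=
  mollify (fun x => -log (supConv (gaussTilt b.rOut ρ) b.rOut x)) b

lemma IsStronglyLogConcaveFun.isBoundedWeight (hρ : IsStronglyLogConcaveFun 0 ρ)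
    (hint : Integrable ρ) (hI : ∫ x, ρ x ≠ 0) : IsBoundedWeight ρ where
  nonneg := hρ.1
  bddAbove := hρ.bddAbove_range hint hI
  exists_pos := by
    by_contra! h
    exact hI (by simp [funext fun x => (h x).antisymm (hρ.1 x)])

namespace IsBoundedWeight

lemma strongConcaveOn_approxPotential (hρ : IsBoundedWeight ρ) (b : ContDiffBump (0 : E)) :
    StrongConcaveOn univ (-(1 / b.rOut)) (approxPotential ρ b) :=
  strongConcaveOn_mollify
    ((isBoundedWeight_gaussTilt hρ b.rOut_pos.le).strongConcaveOn_neg_log_supConv b.rOut_pos.le) b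

end IsBoundedWeight

namespace IsStronglyLogConcaveFun

lemma strongConvexOn_approxPotential (hslc : IsStronglyLogConcaveFun s ρ)
    (hρ : IsBoundedWeight ρ) (hs : 0 ≤ s) (b : ContDiffBump (0 : E)) :
    StrongConvexOn univ ((s + b.rOut) / (1 + b.rOut * (s + b.rOut))) (approxPotential ρ b) :=
  strongConvexOn_mollify (hslc.strongConvexOn_neg_log_supConv_gaussTilt hρ hs b.rOut_pos) b

lemma hasTemperateGrowth_approxPotential (hslc : IsStronglyLogConcaveFun 0 ρ)
    (hρ : IsBoundedWeight ρ) (b : ContDiffBump (0 : E)) :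
    (approxPotential ρ b).HasTemperateGrowth := by
  have hconv := hslc.convexOn_neg_log_supConv_gaussTilt hρ b.rOut_pos
  have hconc :=
    (isBoundedWeight_gaussTilt hρ b.rOut_pos.le).strongConcaveOn_neg_log_supConv b.rOut_pos.le
  exact hasTemperateGrowth_mollify (continuous_of_strongConvexOn hconv)
    (hasPolyGrowth_of_strongConvexOn_of_strongConcaveOn hconv hconc) b

lemma exp_neg_approxPotential_le (hslc : IsStronglyLogConcaveFun 0 ρ) (hρ : IsBoundedWeight ρ)
    (b : ContDiffBump (0 : E)) (x : E) : exp (-approxPotential ρ b x) ≤ supConv ρ b.rOut x := by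
  have hl := b.rOut_pos
  have hpos := (isBoundedWeight_gaussTilt hρ hl.le).supConv_pos hl.le x
  have h := add_le_mollify (hslc.convexOn_neg_log_supConv_gaussTilt hρ hl) le_rfl b x
  calc exp (-approxPotential ρ b x) ≤ exp (log (supConv (gaussTilt b.rOut ρ) b.rOut x)) :=
        exp_le_exp.2 (by rw [approxPotential]; linarith)
    _ = supConv (gaussTilt b.rOut ρ) b.rOut x := exp_log hpos
    _ ≤ supConv ρ b.rOut x := hρ.supConv_mono hl.le (hρ.gaussTilt_le hl.le) x

end IsStronglyLogConcaveFun

lemma IsBoundedWeight.le_exp_neg_approxPotential (hρ : IsBoundedWeight ρ)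
    (b : ContDiffBump (0 : E)) (x : E) :
    exp (-b.rOut / 2) * gaussTilt b.rOut ρ x ≤ exp (-approxPotential ρ b x) := by
  have hl := b.rOut_pos
  have hρ' := isBoundedWeight_gaussTilt hρ hl.le
  have h := mollify_le_sub (hρ'.strongConcaveOn_neg_log_supConv hl.le)
    (neg_nonpos.2 (by positivity)) b x
  have hscale : -(1 / b.rOut) / 2 * b.rOut ^ 2 = -b.rOut / 2 := by field_simp
  rw [hscale] at h
  calc exp (-b.rOut / 2) * gaussTilt b.rOut ρ x
      ≤ exp (-b.rOut / 2) * supConv (gaussTilt b.rOut ρ) b.rOut x := by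
        gcongr
        exact hρ'.le_supConv hl.le x
    _ = exp (-b.rOut / 2 + log (supConv (gaussTilt b.rOut ρ) b.rOut x)) := by
        rw [Real.exp_add, exp_log (hρ'.supConv_pos hl.le x)]
    _ ≤ exp (-approxPotential ρ b x) := exp_le_exp.2 (by rw [approxPotential]; linarith)

section Limit

variable {ι : Type*} {L : Filter ι} {b : ι → ContDiffBump (0 : E)}

lemma tendsto_exp_neg_approxPotential (hslc : IsStronglyLogConcaveFun 0 ρ)
    (hρ : IsBoundedWeight ρ) (hb : Tendsto (fun i => (b i).rOut) L (𝓝 0)) {x : E}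
    (hx : ContinuousAt ρ x) :
    Tendsto (fun i => exp (-approxPotential ρ (b i) x)) L (𝓝 (ρ x)) := by
  have hb' : Tendsto (fun i => (b i).rOut) L (𝓝[>] 0) :=
    tendsto_nhdsWithin_iff.2 ⟨hb, Eventually.of_forall fun i => (b i).rOut_pos⟩
  have hlow : Tendsto (fun i => exp (-(b i).rOut / 2) * gaussTilt (b i).rOut ρ x) L (𝓝 (ρ x)) := by
    have hcont : Continuous fun l : ℝ => exp (-l / 2) * gaussTilt l ρ x := by
      unfold gaussTilt
      fun_prop
    simpa [gaussTilt, Function.comp_def] using (hcont.tendsto 0).comp hb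
  exact tendsto_of_tendsto_of_tendsto_of_le_of_le hlow ((hρ.tendsto_supConv hx).comp hb')
    (fun i => hρ.le_exp_neg_approxPotential (b i) x)
    (fun i => hslc.exp_neg_approxPotential_le hρ (b i) x)

lemma exists_exp_neg_approxPotential_le (hslc : IsStronglyLogConcaveFun 0 ρ)
    (hint : Integrable ρ) (hI : ∫ x, ρ x ≠ 0) :
    ∃ C a : ℝ, 0 ≤ C ∧ 0 < a ∧ ∀ (b : ContDiffBump (0 : E)) (x : E),
      exp (-approxPotential ρ b x) ≤ C * exp (a ^ 2 * b.rOut / 2) * exp (-a * ‖x‖) := by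
  obtain ⟨C, a, ha, hC⟩ := hslc.exists_le_mul_exp_neg_norm hint hI
  have hC₀ : 0 ≤ C := by simpa using (hslc.1 0).trans (hC 0)
  exact ⟨C, a, hC₀, ha, fun b x =>
    (hslc.exp_neg_approxPotential_le (hslc.isBoundedWeight hint hI) b x).trans
      (supConv_le_mul_exp_neg_norm b.rOut_pos hC ha.le hC₀ x)⟩

lemma integrable_exp_neg_approxPotential (hslc : IsStronglyLogConcaveFun 0 ρ)
    (hint : Integrable ρ) (hI : ∫ x, ρ x ≠ 0) (b : ContDiffBump (0 : E)) :
    Integrable fun x => exp (-approxPotential ρ b x) := by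
  obtain ⟨C, a, -, ha, hle⟩ := exists_exp_neg_approxPotential_le hslc hint hI
  have hc : Continuous (approxPotential ρ b) :=
    (hslc.hasTemperateGrowth_approxPotential (hslc.isBoundedWeight hint hI) b).1.continuous
  refine ((integrable_one_add_norm_pow_mul_exp_neg 0 ha).const_mul
    (C * exp (a ^ 2 * b.rOut / 2))).mono' (by fun_prop) (ae_of_all _ fun x => ?_)
  simpa [Real.norm_of_nonneg (exp_pos _).le] using hle b x

lemma tendsto_integral_mul_exp_neg_approxPotential [L.IsCountablyGenerated]
    (hslc : IsStronglyLogConcaveFun 0 ρ) (hint : Integrable ρ) (hI : ∫ x, ρ x ≠ 0)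
    (hb : Tendsto (fun i => (b i).rOut) L (𝓝 0)) {F : E → ℝ} (hF : AEStronglyMeasurable F)
    (hF' : HasPolyGrowth F) :
    Tendsto (fun i => ∫ x, F x * exp (-approxPotential ρ (b i) x)) L (𝓝 (∫ x, F x * ρ x)) := by
  have hρ := hslc.isBoundedWeight hint hI
  obtain ⟨C, a, hC, ha, hle⟩ := exists_exp_neg_approxPotential_le hslc hint hI
  refine tendsto_integral_mul_of_le_mul_exp_neg (C := C * exp (a ^ 2 * 1 / 2)) ha
    (fun i => (integrable_exp_neg_approxPotential hslc hint hI (b i)).aestronglyMeasurable)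
    (fun i x => (exp_pos _).le) ?_
    (hslc.ae_continuousAt.mono fun x hx => tendsto_exp_neg_approxPotential hslc hρ hb hx) hF hF'
  filter_upwards [hb.eventually (ge_mem_nhds one_pos)] with i hi x
  exact (hle (b i) x).trans (by gcongr)

/-- Convergence of the integrals of all measurable functions of polynomial growth. -/
def TendstoPolyGrowth (ν : ι → Measure E) (L : Filter ι) (μ : Measure E) : Prop :=
  ∀ F : E → ℝ, Measurable F → HasPolyGrowth F →
    Tendsto (fun i => ∫ x, F x ∂ν i) L (𝓝 (∫ x, F x ∂μ))

theorem tendstoPolyGrowth_gibbsMeasure_approxPotential [L.IsCountablyGenerated]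
    (hslc : IsStronglyLogConcaveFun 0 ρ) (hI : ∫ x, ρ x = 1)
    (hb : Tendsto (fun i => (b i).rOut) L (𝓝 0)) :
    TendstoPolyGrowth (fun i => gibbsMeasure (normalize (approxPotential ρ (b i)))) L
      (volume.withDensity fun x => ENNReal.ofReal (ρ x)) := by
  have hint := integrable_of_integral_eq_one hI
  have hI₀ : ∫ x, ρ x ≠ 0 := hI ▸ one_ne_zero
  have hc : ∀ i, Continuous (approxPotential ρ (b i)) := fun i =>
    (hslc.hasTemperateGrowth_approxPotential (hslc.isBoundedWeight hint hI₀) (b i)).1.continuous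
  have hlim : ∀ {F : E → ℝ}, Measurable F → HasPolyGrowth F →
      Tendsto (fun i => ∫ x, F x * exp (-approxPotential ρ (b i) x)) L (𝓝 (∫ x, F x * ρ x)) :=
    fun hF => tendsto_integral_mul_exp_neg_approxPotential hslc hint hI₀ hb hF.aestronglyMeasurable
  intro F hF hF'
  have hmass := hlim (F := fun _ => 1) measurable_const ⟨0, 1, by simp⟩
  simp only [one_mul, hI] at hmass
  simp only [integral_gibbsMeasure_normalize (hc _)
    (integrable_exp_neg_approxPotential hslc hint hI₀ _),
    integral_withDensity_ofReal hint.aemeasurable hslc.1]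
  have h := (hlim hF hF').div hmass one_ne_zero
  simp only [div_one] at h
  exact h

end Limit

end Approximation

section SquaredGradient

variable {F : Type*} [NormedAddCommGroup F] [NormedSpace ℝ F]

open Classical in
/-- The squared norm of the gradient of `f`, with value `⊤` where `f` is not differentiable. This
convention makes the chain rule an inequality that holds without differentiability assumptions. -/
def gradSq (f : F → ℝ) (z : F) : ℝ≥0∞ :=
  if DifferentiableAt ℝ f z then ‖fderiv ℝ f z‖ₑ ^ 2 else ⊤

lemma enorm_deriv_comp_sq_le (f : F → ℝ)
    {γ : ℝ → F} {γ' : F} {τ : ℝ} (hγ : HasDerivAt γ γ' τ) (hγ' : γ' ≠ 0) :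
    ‖deriv (fun t => f (γ t)) τ‖ₑ ^ 2 ≤ gradSq f (γ τ) * ‖γ'‖ₑ ^ 2 := by
  by_cases hf : DifferentiableAt ℝ f (γ τ)
  · have hchain : deriv (fun t => f (γ t)) τ = fderiv ℝ f (γ τ) γ' :=
      (hf.hasFDerivAt.comp_hasDerivAt τ hγ).deriv
    rw [gradSq, if_pos hf, hchain, ← mul_pow]
    gcongr
    exact (fderiv ℝ f (γ τ)).le_opENorm γ'
  · simp [gradSq, hf, ENNReal.top_mul, hγ']

lemma enorm_sub_sq_le_lintegral_enorm_deriv_sq {h : ℝ → ℝ} (hh : LocallyLipschitz h) {a b : ℝ}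
    (hab : a ≤ b) :
    ‖h b - h a‖ₑ ^ 2 ≤ ENNReal.ofReal (b - a) * ∫⁻ τ in Ioo a b, ‖deriv h τ‖ₑ ^ 2 := by
  obtain ⟨K, hK⟩ := LocallyLipschitzOn.exists_lipschitzOnWith_of_compact
    (isCompact_uIcc (a := a) (b := b)) (hh.locallyLipschitzOn (s := _))
  have hftc : ∫ τ in Ioo a b, deriv h τ = h b - h a := by
    rw [← hK.absolutelyContinuousOnInterval.integral_deriv_eq_sub,
      intervalIntegral.integral_of_le hab, integral_Ioc_eq_integral_Ioo]
  have hholder := ENNReal.lintegral_mul_le_Lp_mul_Lq (volume.restrict (Ioo a b))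
    Real.HolderConjugate.two_two (measurable_deriv h).enorm.aemeasurable
    (aemeasurable_const (b := (1 : ℝ≥0∞)))
  simp only [Pi.mul_apply, mul_one, ENNReal.one_rpow, lintegral_const, one_mul,
    Measure.restrict_apply_univ, Real.volume_Ioo] at hholder
  calc ‖h b - h a‖ₑ ^ 2 ≤ (∫⁻ τ in Ioo a b, ‖deriv h τ‖ₑ) ^ 2 := by
        rw [← hftc]
        gcongr
        exact enorm_integral_le_lintegral_enorm _
    _ ≤ ((∫⁻ τ in Ioo a b, ‖deriv h τ‖ₑ ^ (2 : ℝ)) ^ (1 / 2 : ℝ) *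
          ENNReal.ofReal (b - a) ^ (1 / 2 : ℝ)) ^ 2 := by gcongr
    _ = ENNReal.ofReal (b - a) * ∫⁻ τ in Ioo a b, ‖deriv h τ‖ₑ ^ 2 := by
        rw [mul_comm, ← ENNReal.mul_rpow_of_nonneg _ _ (by norm_num), ← ENNReal.rpow_natCast,
          ← ENNReal.rpow_mul]
        norm_num

lemma hasDerivAt_add_sin_sq_smul
    (x u : F) (τ : ℝ) :
    HasDerivAt (fun t : ℝ => x + sin t ^ 2 • u) (sin (2 * τ) • u) τ := by
  have h := (((hasDerivAt_sin τ).pow 2).smul_const u).const_add x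
  refine h.congr_deriv ?_
  rw [sin_two_mul]
  simp

lemma enorm_sub_sq_le_lintegral_gradSq
    {f : F → ℝ} (hf : LocallyLipschitz f) (x u : F) :
    ‖f (x + u) - f x‖ₑ ^ 2 ≤ ENNReal.ofReal (π / 2) *
      ∫⁻ τ in Ioo 0 (π / 2), gradSq f (x + sin τ ^ 2 • u) * ‖sin (2 * τ) • u‖ₑ ^ 2 := by
  rcases eq_or_ne u 0 with rfl | hu
  · simp
  have hγ : ContDiff ℝ 1 fun t : ℝ => x + sin t ^ 2 • u := by fun_prop
  have h := enorm_sub_sq_le_lintegral_enorm_deriv_sq (hf.comp hγ.locallyLipschitz)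
    (a := 0) (b := π / 2) (by positivity)
  simp only [Function.comp_apply, sin_pi_div_two, sin_zero, one_pow, one_smul, ne_eq,
    OfNat.ofNat_ne_zero, not_false_eq_true, zero_pow, zero_smul, add_zero, sub_zero] at h
  refine h.trans (mul_le_mul' le_rfl (setLIntegral_mono' measurableSet_Ioo fun τ hτ => ?_))
  have hsin : 0 < sin (2 * τ) := sin_pos_of_pos_of_lt_pi (by linarith [hτ.1]) (by linarith [hτ.2])
  exact enorm_deriv_comp_sq_le f (hasDerivAt_add_sin_sq_smul x u τ) (smul_ne_zero hsin.ne' hu)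

lemma measurable_gradSq [MeasurableSpace F] [OpensMeasurableSpace F] (f : F → ℝ) :
    Measurable (gradSq f) :=
  Measurable.ite (measurableSet_of_differentiableAt ℝ f)
    ((measurable_fderiv ℝ f).enorm.pow_const 2) measurable_const

variable [FiniteDimensional ℝ E] [MeasurableSpace E] [BorelSpace E]

lemma ae_differentiableAt_of_locallyLipschitz {f : E → ℝ} (hf : LocallyLipschitz f) :
    ∀ᵐ x, DifferentiableAt ℝ f x := by
  have h : ∀ k : ℕ, ∀ᵐ x : E, x ∈ closedBall (0 : E) k →
      DifferentiableWithinAt ℝ f (closedBall (0 : E) k) x := by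
    intro k
    obtain ⟨K, hK⟩ := LocallyLipschitzOn.exists_lipschitzOnWith_of_compact
      (isCompact_closedBall (0 : E) (k : ℝ)) (hf.locallyLipschitzOn (s := _))
    exact hK.ae_differentiableWithinAt_of_mem
  filter_upwards [ae_all_iff.2 h] with x hx
  obtain ⟨k, hk⟩ := exists_nat_gt ‖x‖
  have hball : x ∈ ball (0 : E) k := by simpa using hk
  exact (hx k (ball_subset_closedBall hball)).differentiableAt
    (mem_of_superset (isOpen_ball.mem_nhds hball) ball_subset_closedBall)

lemma gradSq_ae_eq {f : E → ℝ} (hf : LocallyLipschitz f) :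
    gradSq f =ᵐ[volume] fun z => ‖fderiv ℝ f z‖ₑ ^ 2 :=
  (ae_differentiableAt_of_locallyLipschitz hf).mono fun _ hx => if_pos hx

end SquaredGradient

section Displacement

variable {ψ : E → ℝ} {δ a : ℝ}

/-- A Gaussian profile; it dominates the cost `‖u‖ ^ 2` of moving mass along `u`, multiplied by the
gain that strong convexity of the potential provides. -/
def gaussKernel {F : Type*} [NormedAddCommGroup F] (a : ℝ) (u : F) : ℝ≥0∞ :=
  ENNReal.ofReal (a⁻¹ * exp (-(a * ‖u‖ ^ 2)))

lemma measurable_gaussKernel {F : Type*} [NormedAddCommGroup F] [MeasurableSpace F]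
    [OpensMeasurableSpace F] (a : ℝ) : Measurable (gaussKernel a : F → ℝ≥0∞) := by
  unfold gaussKernel
  fun_prop

lemma mul_exp_neg_le (ha : 0 < a) (r : ℝ) :
    r * exp (-(2 * a * r)) ≤ a⁻¹ * exp (-(a * r)) := by
  have hexp : exp (-(2 * a * r)) = exp (-(a * r)) * exp (-(a * r)) := by
    rw [← Real.exp_add]
    ring_nf
  have hinv : exp (a * r) * exp (-(a * r)) = 1 := by
    rw [← Real.exp_add, add_neg_cancel, Real.exp_zero]
  calc r * exp (-(2 * a * r)) = a⁻¹ * (a * r) * exp (-(a * r)) * exp (-(a * r)) := by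
        rw [hexp]
        field_simp
    _ ≤ a⁻¹ * exp (a * r) * exp (-(a * r)) * exp (-(a * r)) := by
        gcongr
        linarith [Real.add_one_le_exp (a * r)]
    _ = a⁻¹ * exp (-(a * r)) := by rw [mul_assoc a⁻¹, hinv, mul_one]

lemma add_add_le_of_strongConvexOn (hψ : StrongConvexOn univ δ ψ) (x u : E) (τ : ℝ) :
    ψ (x + sin τ ^ 2 • u) + ψ (x + sin τ ^ 2 • u + cos (2 * τ) • u) +
      δ / 4 * ‖sin (2 * τ) • u‖ ^ 2 ≤ ψ x + ψ (x + u) := by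
  have hsum : cos τ ^ 2 + sin τ ^ 2 = 1 := cos_sq_add_sin_sq τ
  have h₁ := hψ.2 (mem_univ x) (mem_univ (x + u)) (sq_nonneg (cos τ)) (sq_nonneg (sin τ)) hsum
  have h₂ := hψ.2 (mem_univ x) (mem_univ (x + u)) (sq_nonneg (sin τ)) (sq_nonneg (cos τ))
    (sin_sq_add_cos_sq τ)
  have hz : cos τ ^ 2 • x + sin τ ^ 2 • (x + u) = x + sin τ ^ 2 • u := by
    rw [smul_add, ← add_assoc, ← add_smul, hsum, one_smul]
  have hw : sin τ ^ 2 • x + cos τ ^ 2 • (x + u) = x + sin τ ^ 2 • u + cos (2 * τ) • u := by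
    rw [smul_add, ← add_assoc, ← add_smul, add_comm (sin τ ^ 2), hsum, one_smul, add_assoc,
      ← add_smul, cos_two_mul']
    congr 2
    ring
  rw [hz, sub_add_cancel_left, norm_neg] at h₁
  rw [hw, sub_add_cancel_left, norm_neg] at h₂
  simp only [smul_eq_mul] at h₁ h₂
  rw [norm_smul, mul_pow, Real.norm_eq_abs, sq_abs, sin_two_mul]
  linear_combination h₁ + h₂ + (ψ x + ψ (x + u)) * hsum

lemma expNeg_mul_expNeg_mul_le_of_strongConvexOn (hδ : 0 < δ) (hψ : StrongConvexOn univ δ ψ)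
    (x u : E) (τ : ℝ) :
    ENNReal.ofReal (exp (-ψ x)) * ENNReal.ofReal (exp (-ψ (x + u))) * ‖sin (2 * τ) • u‖ₑ ^ 2 ≤
      ENNReal.ofReal (exp (-ψ (x + sin τ ^ 2 • u))) *
        ENNReal.ofReal (exp (-ψ (x + sin τ ^ 2 • u + cos (2 * τ) • u))) *
          gaussKernel (δ / 8) (sin (2 * τ) • u) := by
  have hconv := add_add_le_of_strongConvexOn hψ x u τ
  set z := x + sin τ ^ 2 • u
  set z' := z + cos (2 * τ) • u
  set r := ‖sin (2 * τ) • u‖ ^ 2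
  have hreal : exp (-ψ x) * exp (-ψ (x + u)) * r ≤
      exp (-ψ z) * exp (-ψ z') * ((δ / 8)⁻¹ * exp (-(δ / 8 * r))) :=
    calc exp (-ψ x) * exp (-ψ (x + u)) * r
        ≤ exp (-ψ z) * exp (-ψ z') * exp (-(2 * (δ / 8) * r)) * r := by
          refine mul_le_mul_of_nonneg_right ?_ (sq_nonneg _)
          simp only [← Real.exp_add]
          exact exp_le_exp.2 (by linarith)
      _ = exp (-ψ z) * exp (-ψ z') * (r * exp (-(2 * (δ / 8) * r))) := by ring
      _ ≤ exp (-ψ z) * exp (-ψ z') * ((δ / 8)⁻¹ * exp (-(δ / 8 * r))) :=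
          mul_le_mul_of_nonneg_left (mul_exp_neg_le (by positivity) r) (by positivity)
  rw [gaussKernel, ← ofReal_norm, ← ENNReal.ofReal_pow (norm_nonneg _),
    ← ENNReal.ofReal_mul (exp_pos _).le, ← ENNReal.ofReal_mul (by positivity),
    ← ENNReal.ofReal_mul (exp_pos _).le, ← ENNReal.ofReal_mul (by positivity)]
  exact ENNReal.ofReal_le_ofReal hreal

end Displacement

section Transport

variable [FiniteDimensional ℝ E] [MeasurableSpace E] [BorelSpace E]

lemma lintegral_comp_add_smul {w : E → ℝ≥0∞} (hw : Measurable w) (z : E) {c : ℝ} (hc : c ≠ 0) :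
    ∫⁻ u, w (z + c • u) = ENNReal.ofReal (|c|⁻¹ ^ Module.finrank ℝ E) * ∫⁻ x, w x := by
  rw [← lintegral_map (f := fun v => w (z + v)) (by fun_prop) (measurable_const_smul c),
    Measure.map_addHaar_smul volume hc, lintegral_smul_measure, lintegral_add_left_eq_self,
    abs_inv, abs_pow, inv_pow, smul_eq_mul]

lemma lintegral_gaussKernel_lt_top {a : ℝ} (ha : 0 < a) : ∫⁻ u : E, gaussKernel a u < ⊤ := by
  have hint : Integrable fun u : E => exp (-a * ‖u‖ ^ 2) := by
    refine Integrable.of_integral_ne_zero ?_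
    rw [GaussianFourier.integral_rexp_neg_mul_sq_norm ha]
    positivity
  simpa only [gaussKernel, neg_mul] using (hint.const_mul a⁻¹).lintegral_lt_top

/-- The constant in the bound of the total mass that the transport sends through one point. -/
def transportConst (E : Type*) [NormedAddCommGroup E] [NormedSpace ℝ E] [MeasureSpace E] (a : ℝ)
    (M : ℝ≥0∞) : ℝ≥0∞ :=
  ENNReal.ofReal a⁻¹ * 2 ^ Module.finrank ℝ E + M * ∫⁻ u : E, gaussKernel a ((1 / 2 : ℝ) • u)

lemma transportConst_lt_top {a : ℝ} {M : ℝ≥0∞} (ha : 0 < a) (hM : M < ⊤) :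
    transportConst E a M < ⊤ := by
  have hmass : ∫⁻ u : E, gaussKernel a ((1 / 2 : ℝ) • u) < ⊤ := by
    have h := lintegral_comp_add_smul (measurable_gaussKernel a) (0 : E) (c := 1 / 2) (by norm_num)
    simp only [zero_add] at h
    rw [h]
    exact ENNReal.mul_lt_top ENNReal.ofReal_lt_top (lintegral_gaussKernel_lt_top ha)
  exact ENNReal.add_lt_top.2 ⟨ENNReal.mul_lt_top ENNReal.ofReal_lt_top
    (ENNReal.pow_lt_top ENNReal.ofNat_lt_top), ENNReal.mul_lt_top hM hmass⟩

-- If `c` is bounded away from `0`, the substitution `x = z + c • u` controls the integral;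
-- otherwise `s` is bounded away from `0` and the Gaussian factor does.
lemma lintegral_mul_gaussKernel_le {w : E → ℝ≥0∞} (hw : Measurable w) (hw₁ : ∫⁻ x, w x = 1)
    {M : ℝ≥0∞} (hM : ∀ x, w x ≤ M) {a : ℝ} (ha : 0 < a) {c s : ℝ} (hcs : c ^ 2 + s ^ 2 = 1)
    (z : E) :
    ∫⁻ u, w (z + c • u) * gaussKernel a (s • u) ≤ transportConst E a M := by
  by_cases hc : 1 / 2 ≤ |c|
  · have hc₀ : c ≠ 0 := abs_pos.1 (by linarith)
    have hker : ∀ u : E, gaussKernel a (s • u) ≤ ENNReal.ofReal a⁻¹ := fun u =>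
      ENNReal.ofReal_le_ofReal (mul_le_of_le_one_right (by positivity)
        (exp_le_one_iff.2 (neg_nonpos.2 (by positivity))))
    calc ∫⁻ u, w (z + c • u) * gaussKernel a (s • u)
        ≤ ∫⁻ u, ENNReal.ofReal a⁻¹ * w (z + c • u) := by
          refine lintegral_mono fun u => ?_
          rw [mul_comm]
          exact mul_le_mul' (hker u) le_rfl
      _ = ENNReal.ofReal a⁻¹ * ENNReal.ofReal (|c|⁻¹ ^ Module.finrank ℝ E) := by
          rw [lintegral_const_mul _ (by fun_prop), lintegral_comp_add_smul hw z hc₀, hw₁, mul_one]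
      _ ≤ ENNReal.ofReal a⁻¹ * 2 ^ Module.finrank ℝ E := by
          rw [← ENNReal.ofReal_ofNat 2, ← ENNReal.ofReal_pow zero_le_two]
          gcongr
          simpa using inv_anti₀ (by norm_num) hc
      _ ≤ transportConst E a M := le_self_add
  · have hs : 1 / 2 ≤ |s| := by
      rw [← abs_of_pos (one_half_pos (α := ℝ)), ← sq_le_sq]
      have := sq_lt_sq' (by linarith [abs_nonneg c]) (not_le.1 hc)
      rw [sq_abs] at this
      linarith
    have hker : ∀ u : E, gaussKernel a (s • u) ≤ gaussKernel a ((1 / 2 : ℝ) • u) := fun u => by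
      simp only [gaussKernel, norm_smul, Real.norm_eq_abs, abs_of_pos (one_half_pos (α := ℝ))]
      gcongr
    calc ∫⁻ u, w (z + c • u) * gaussKernel a (s • u)
        ≤ ∫⁻ u, M * gaussKernel a ((1 / 2 : ℝ) • u) :=
          lintegral_mono fun u => mul_le_mul' (hM _) (hker u)
      _ = M * ∫⁻ u : E, gaussKernel a ((1 / 2 : ℝ) • u) :=
          lintegral_const_mul _ ((measurable_gaussKernel a).comp (measurable_const_smul _))
      _ ≤ transportConst E a M := le_add_self

lemma lintegral_comp_add_smul_swap {ν : Measure ℝ} [SFinite ν] {G : E → ℝ → E → ℝ≥0∞}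
    (hG : Measurable fun p : E × ℝ × E => G p.1 p.2.1 p.2.2) {σ : ℝ → ℝ} (hσ : Measurable σ) :
    ∫⁻ u, ∫⁻ x, ∫⁻ τ, G (x + σ τ • u) τ u ∂ν = ∫⁻ τ, (∫⁻ z, ∫⁻ u, G z τ u) ∂ν := by
  calc ∫⁻ u, ∫⁻ x, ∫⁻ τ, G (x + σ τ • u) τ u ∂ν
      = ∫⁻ u, ∫⁻ τ, (∫⁻ x, G (x + σ τ • u) τ u) ∂ν := by
        refine lintegral_congr fun u => lintegral_lintegral_swap (Measurable.aemeasurable ?_)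
        exact hG.comp (f := fun p : E × ℝ => (p.1 + σ p.2 • u, p.2, u)) (by fun_prop)
    _ = ∫⁻ u, ∫⁻ τ, (∫⁻ z, G z τ u) ∂ν :=
        lintegral_congr fun u => lintegral_congr fun τ =>
          lintegral_add_right_eq_self (fun z => G z τ u) (σ τ • u)
    _ = ∫⁻ τ, (∫⁻ u, ∫⁻ z, G z τ u) ∂ν := by
        refine lintegral_lintegral_swap (Measurable.aemeasurable ?_)
        exact (hG.comp (f := fun p : (E × ℝ) × E => (p.2, p.1.2, p.1.1))
          (by fun_prop)).lintegral_prod_right'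
    _ = ∫⁻ τ, (∫⁻ z, ∫⁻ u, G z τ u) ∂ν := by
        refine lintegral_congr fun τ => lintegral_lintegral_swap (Measurable.aemeasurable ?_)
        exact hG.comp (f := fun p : E × E => (p.2, τ, p.1)) (by fun_prop)

end Transport

section Poincare

/-- The inequality that strong convexity of a potential gives for its density `w`: moving the
endpoints `x` and `x + u` towards each other along the path `x + sin τ ^ 2 • u` increases the
product of the densities at the two points. -/
def HasDisplacementGain (w : E → ℝ≥0∞) (a : ℝ) : Prop :=
  ∀ x u : E, ∀ τ : ℝ, w x * w (x + u) * ‖sin (2 * τ) • u‖ₑ ^ 2 ≤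
    w (x + sin τ ^ 2 • u) * w (x + sin τ ^ 2 • u + cos (2 * τ) • u) *
      gaussKernel a (sin (2 * τ) • u)

variable {w : E → ℝ≥0∞} {a : ℝ} {M : ℝ≥0∞} {f : E → ℝ}

lemma HasDisplacementGain.mul_enorm_sub_sq_le (hwa : HasDisplacementGain w a)
    (hM : ∀ x, w x ≤ M) (hM' : M < ⊤) (hf : LocallyLipschitz f) (x u : E) :
    w x * w (x + u) * ‖f (x + u) - f x‖ₑ ^ 2 ≤ ENNReal.ofReal (π / 2) *
      ∫⁻ τ in Ioo 0 (π / 2), gradSq f (x + sin τ ^ 2 • u) * w (x + sin τ ^ 2 • u) *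
        (w (x + sin τ ^ 2 • u + cos (2 * τ) • u) * gaussKernel a (sin (2 * τ) • u)) := by
  have hfin : w x * w (x + u) ≠ ⊤ :=
    ENNReal.mul_ne_top ((hM _).trans_lt hM').ne ((hM _).trans_lt hM').ne
  refine (mul_le_mul' le_rfl (enorm_sub_sq_le_lintegral_gradSq hf x u)).trans ?_
  rw [mul_left_comm, ← lintegral_const_mul' _ _ hfin]
  refine mul_le_mul' le_rfl (lintegral_mono fun τ => ?_)
  calc w x * w (x + u) * (gradSq f (x + sin τ ^ 2 • u) * ‖sin (2 * τ) • u‖ₑ ^ 2)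
      = gradSq f (x + sin τ ^ 2 • u) * (w x * w (x + u) * ‖sin (2 * τ) • u‖ₑ ^ 2) := by ring
    _ ≤ _ := mul_le_mul' le_rfl (hwa x u τ)
    _ = _ := by ring

variable [FiniteDimensional ℝ E] [MeasurableSpace E] [BorelSpace E]

/-- `C` is an admissible constant in the Poincaré inequality for `μ`. -/
def SatisfiesPoincare (μ : Measure E) (C : ℝ) : Prop :=
  0 ≤ C ∧ ∀ f : E → ℝ, LocallyLipschitz f → Integrable (fun x => ‖fderiv ℝ f x‖ ^ 2) μ →
    ∫ x, f x ^ 2 ∂μ - (∫ x, f x ∂μ) ^ 2 ≤ C * ∫ x, ‖fderiv ℝ f x‖ ^ 2 ∂μ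

lemma ofReal_variance_le_lintegral_enorm_sub_sq {α : Type*} [MeasurableSpace α] {μ : Measure α}
    [IsProbabilityMeasure μ] {f : α → ℝ} (hf : MemLp f 2 μ) :
    ENNReal.ofReal (∫ x, f x ^ 2 ∂μ - (∫ x, f x ∂μ) ^ 2) ≤
      ∫⁻ y, ∫⁻ x, ‖f x - f y‖ₑ ^ 2 ∂μ ∂μ := by
  have hy : ∀ y, ENNReal.ofReal (ProbabilityTheory.variance f μ) ≤ ∫⁻ x, ‖f x - f y‖ₑ ^ 2 ∂μ := by
    intro y
    have hmem : MemLp (fun x => f x - f y) 2 μ := hf.sub (memLp_const _)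
    have hsub : AEStronglyMeasurable (fun x => f x - f y) μ := hmem.aestronglyMeasurable
    rw [← ProbabilityTheory.variance_sub_const hf.aestronglyMeasurable (f y)]
    refine (ENNReal.ofReal_le_ofReal (ProbabilityTheory.variance_le_expectation_sq hsub)).trans ?_
    simp only [Pi.pow_apply]
    rw [ofReal_integral_eq_lintegral_ofReal hmem.integrable_sq (ae_of_all _ fun x => sq_nonneg _)]
    refine (lintegral_congr fun x => ?_).le
    rw [← ofReal_norm, ← ENNReal.ofReal_pow (norm_nonneg _), Real.norm_eq_abs, sq_abs]
  have hvar := ProbabilityTheory.variance_eq_sub hf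
  simp only [Pi.pow_apply] at hvar
  rw [← hvar]
  simpa using lintegral_mono (μ := μ) hy

lemma lintegral_lintegral_withDensity_enorm_sub_sq (hw : Measurable w) (hf : Continuous f) :
    ∫⁻ y, ∫⁻ x, ‖f x - f y‖ₑ ^ 2 ∂volume.withDensity w ∂volume.withDensity w =
      ∫⁻ u, ∫⁻ x, w x * w (x + u) * ‖f (x + u) - f x‖ₑ ^ 2 := by
  have hF : Measurable fun p : E × E => ‖f p.2 - f p.1‖ₑ ^ 2 := by fun_prop
  calc ∫⁻ y, ∫⁻ x, ‖f x - f y‖ₑ ^ 2 ∂volume.withDensity w ∂volume.withDensity w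
      = ∫⁻ y, w y * ∫⁻ x, w x * ‖f x - f y‖ₑ ^ 2 := by
        rw [lintegral_withDensity_eq_lintegral_mul _ hw hF.lintegral_prod_right']
        refine lintegral_congr fun y => ?_
        rw [Pi.mul_apply, lintegral_withDensity_eq_lintegral_mul _ hw (by fun_prop)]
        rfl
    _ = ∫⁻ y, ∫⁻ x, w y * w x * ‖f x - f y‖ₑ ^ 2 := by
        refine lintegral_congr fun y => ?_
        rw [← lintegral_const_mul _ (by fun_prop)]
        simp only [mul_assoc]
    _ = ∫⁻ y, ∫⁻ u, w y * w (y + u) * ‖f (y + u) - f y‖ₑ ^ 2 :=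
        lintegral_congr fun y =>
          (lintegral_add_left_eq_self (fun x => w y * w x * ‖f x - f y‖ₑ ^ 2) y).symm
    _ = ∫⁻ u, ∫⁻ x, w x * w (x + u) * ‖f (x + u) - f x‖ₑ ^ 2 :=
        lintegral_lintegral_swap (Measurable.aemeasurable (by fun_prop))

lemma HasDisplacementGain.lintegral_enorm_sub_sq_le (hwa : HasDisplacementGain w a) (ha : 0 < a)
    (hw : Measurable w) (hw₁ : ∫⁻ x, w x = 1) (hM : ∀ x, w x ≤ M) (hM' : M < ⊤)
    (hf : LocallyLipschitz f) :
    ∫⁻ u, ∫⁻ x, w x * w (x + u) * ‖f (x + u) - f x‖ₑ ^ 2 ≤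
      ENNReal.ofReal (π / 2) * ENNReal.ofReal (π / 2) * transportConst E a M *
        ∫⁻ z, gradSq f z * w z := by
  have hg := measurable_gradSq f
  have hk := measurable_gaussKernel (F := E) a
  set G : E → ℝ → E → ℝ≥0∞ := fun z τ u =>
    gradSq f z * w z * (w (z + cos (2 * τ) • u) * gaussKernel a (sin (2 * τ) • u)) with hG_def
  have hG : Measurable fun p : E × ℝ × E => G p.1 p.2.1 p.2.2 := by
    simp only [hG_def]
    fun_prop
  have hin : ∀ z τ, ∫⁻ u, G z τ u ≤ transportConst E a M * (gradSq f z * w z) := by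
    intro z τ
    rw [lintegral_const_mul _ (by fun_prop), mul_comm]
    exact mul_le_mul' (lintegral_mul_gaussKernel_le hw hw₁ hM ha (cos_sq_add_sin_sq _) z) le_rfl
  calc ∫⁻ u, ∫⁻ x, w x * w (x + u) * ‖f (x + u) - f x‖ₑ ^ 2
      ≤ ∫⁻ u, ∫⁻ x, ENNReal.ofReal (π / 2) * ∫⁻ τ in Ioo 0 (π / 2), G (x + sin τ ^ 2 • u) τ u :=
        lintegral_mono fun u => lintegral_mono fun x => hwa.mul_enorm_sub_sq_le hM hM' hf x u
    _ = ENNReal.ofReal (π / 2) *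
          ∫⁻ u, ∫⁻ x, ∫⁻ τ in Ioo 0 (π / 2), G (x + sin τ ^ 2 • u) τ u := by
        simp only [lintegral_const_mul' _ _ ENNReal.ofReal_ne_top]
    _ = ENNReal.ofReal (π / 2) * ∫⁻ τ in Ioo 0 (π / 2), ∫⁻ z, ∫⁻ u, G z τ u := by
        rw [lintegral_comp_add_smul_swap hG (by fun_prop)]
    _ ≤ ENNReal.ofReal (π / 2) *
          ∫⁻ _ in Ioo 0 (π / 2), transportConst E a M * ∫⁻ z, gradSq f z * w z := by
        refine mul_le_mul' le_rfl (lintegral_mono fun τ => ?_)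
        rw [← lintegral_const_mul _ (by fun_prop)]
        exact lintegral_mono fun z => hin z τ
    _ = _ := by
        rw [lintegral_const, Measure.restrict_apply_univ, Real.volume_Ioo, sub_zero]
        ring

theorem HasDisplacementGain.exists_satisfiesPoincare (hwa : HasDisplacementGain w a) (ha : 0 < a)
    (hw : Measurable w) (hw₁ : ∫⁻ x, w x = 1) (hM : ∀ x, w x ≤ M) (hM' : M < ⊤) :
    ∃ C, SatisfiesPoincare (volume.withDensity w) C := by
  set C := ENNReal.ofReal (π / 2) * ENNReal.ofReal (π / 2) * transportConst E a M with hC_def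
  have hC : C ≠ ⊤ := ENNReal.mul_ne_top (by finiteness) (transportConst_lt_top ha hM').ne
  set ν := volume.withDensity w with hν_def
  have hν : IsProbabilityMeasure ν := ⟨by
    rw [hν_def, withDensity_apply _ MeasurableSet.univ, Measure.restrict_univ, hw₁]⟩
  refine ⟨C.toReal, ENNReal.toReal_nonneg, fun f hf hgrad => ?_⟩
  have hrhs : 0 ≤ C.toReal * ∫ x, ‖fderiv ℝ f x‖ ^ 2 ∂ν := by positivity
  by_cases hsq : Integrable (fun x => f x ^ 2) ν
  swap
  · rw [integral_undef hsq]
    nlinarith [sq_nonneg (∫ x, f x ∂ν)]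
  have hmem : MemLp f 2 ν :=
    (memLp_two_iff_integrable_sq hf.continuous.aestronglyMeasurable).2 hsq
  have hgradSq : ∫⁻ z, gradSq f z * w z = ENNReal.ofReal (∫ x, ‖fderiv ℝ f x‖ ^ 2 ∂ν) := by
    have hm : Measurable fun z => ‖fderiv ℝ f z‖ₑ ^ 2 := (measurable_fderiv ℝ f).enorm.pow_const 2
    rw [ofReal_integral_eq_lintegral_ofReal hgrad (ae_of_all _ fun x => sq_nonneg _)]
    simp only [ENNReal.ofReal_pow (norm_nonneg _), ofReal_norm]
    rw [hν_def, lintegral_withDensity_eq_lintegral_mul _ hw hm]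
    refine lintegral_congr_ae ((gradSq_ae_eq hf).mono fun z hz => ?_)
    simp only [Pi.mul_apply, hz, mul_comm]
  have hvar := (ofReal_variance_le_lintegral_enorm_sub_sq hmem).trans
    (lintegral_lintegral_withDensity_enorm_sub_sq hw hf.continuous).le
  have hmain := hvar.trans (hwa.lintegral_enorm_sub_sq_le ha hw hw₁ hM hM' hf)
  rw [hgradSq, ← hC_def, ← ENNReal.ofReal_toReal hC,
    ← ENNReal.ofReal_mul ENNReal.toReal_nonneg] at hmain
  exact (ENNReal.ofReal_le_ofReal_iff hrhs).1 hmain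

theorem exists_satisfiesPoincare_gibbsMeasure {ψ : E → ℝ} {δ : ℝ} (hδ : 0 < δ)
    (hψ : StrongConvexOn univ δ ψ) (hψ₁ : ∫ x, exp (-ψ x) = 1) :
    ∃ C, SatisfiesPoincare (gibbsMeasure ψ) C := by
  obtain ⟨m, hm⟩ := bddBelow_range_of_strongConvexOn hψ hδ
  have hc : Continuous ψ := continuous_of_strongConvexOn hψ
  have hwa : HasDisplacementGain (fun x => ENNReal.ofReal (exp (-ψ x))) (δ / 8) :=
    expNeg_mul_expNeg_mul_le_of_strongConvexOn hδ hψ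
  refine hwa.exists_satisfiesPoincare (M := ENNReal.ofReal (exp (-m))) (by positivity)
    (by fun_prop) ?_ (fun x => ?_) ENNReal.ofReal_lt_top
  · rw [← ofReal_integral_eq_lintegral_ofReal (integrable_of_integral_eq_one hψ₁)
      (ae_of_all _ fun x => (exp_pos _).le), hψ₁, ENNReal.ofReal_one]
  · have := hm (mem_range_self x)
    gcongr

end Poincare

section Cutoff

variable {f g : E → ℝ} {c : ℝ}

/-- A smooth bump function equal to `1` on the unit ball and vanishing outside the ball of
radius `2`. -/
def unitBump (E : Type u) [NormedAddCommGroup E] : ContDiffBump (0 : E) :=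
  ⟨1, 2, one_pos, one_lt_two⟩

/-- The truncation of `f` at scale `c⁻¹`: it agrees with `f` on the ball of radius `c⁻¹` and
vanishes outside the ball of radius `2 * c⁻¹`. -/
def cutoff (c : ℝ) (f : E → ℝ) (x : E) : ℝ := unitBump E (c • x) * f x

lemma abs_cutoff_le (c : ℝ) (f : E → ℝ) (x : E) : |cutoff c f x| ≤ |f x| := by
  rw [cutoff, abs_mul, abs_of_nonneg (unitBump E).nonneg]
  exact mul_le_of_le_one_left (abs_nonneg _) (unitBump E).le_one

lemma eventually_cutoff_eventuallyEq {ι : Type*} {l : Filter ι} {c : ι → ℝ}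
    (hc : Tendsto c l (𝓝 0)) (f : E → ℝ) (x : E) : ∀ᶠ i in l, cutoff (c i) f =ᶠ[𝓝 x] f := by
  have hx : Tendsto (fun i => ‖c i • x‖) l (𝓝 0) := by simpa using (hc.smul_const x).norm
  filter_upwards [hx.eventually_lt_const one_pos] with i hi
  have hcont : Continuous fun y : E => ‖c i • y‖ := by fun_prop
  filter_upwards [hcont.continuousAt.eventually_lt_const hi] with y hy
  rw [cutoff, (unitBump E).one_of_mem_closedBall (mem_closedBall_zero_iff.2 hy.le), one_mul]

variable [FiniteDimensional ℝ E]

lemma exists_lipschitzWith_unitBump_smul (E : Type u) [NormedAddCommGroup E]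
    [InnerProductSpace ℝ E] [FiniteDimensional ℝ E] :
    ∃ K : ℝ≥0, ∀ c : ℝ, |c| ≤ 1 → LipschitzWith K fun x : E => unitBump E (c • x) := by
  obtain ⟨K, hK⟩ := ContDiff.lipschitzWith_of_hasCompactSupport (unitBump E).hasCompactSupport
    ((unitBump E).contDiff (n := 1)) one_ne_zero
  refine ⟨K, fun c hc => LipschitzWith.of_dist_le_mul fun x y => (hK.dist_le_mul _ _).trans ?_⟩
  rw [dist_smul₀, Real.norm_eq_abs]
  gcongr
  exact mul_le_of_le_one_left dist_nonneg hc

lemma exists_norm_fderiv_cutoff_sq_le (E : Type u) [NormedAddCommGroup E]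
    [InnerProductSpace ℝ E] [FiniteDimensional ℝ E] :
    ∃ K : ℝ, ∀ c : ℝ, |c| ≤ 1 → ∀ (f : E → ℝ) (x : E), DifferentiableAt ℝ f x →
      ‖fderiv ℝ (cutoff c f) x‖ ^ 2 ≤ 2 * ‖fderiv ℝ f x‖ ^ 2 + 2 * K ^ 2 * f x ^ 2 := by
  obtain ⟨K, hK⟩ := exists_lipschitzWith_unitBump_smul E
  refine ⟨K, fun c hc f x hf => ?_⟩
  have hbump : Differentiable ℝ fun y : E => unitBump E (c • y) :=
    (((unitBump E).contDiff (n := 1)).comp (contDiff_const_smul c)).differentiable one_ne_zero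
  have hderiv : fderiv ℝ (cutoff c f) x =
      unitBump E (c • x) • fderiv ℝ f x + f x • fderiv ℝ (fun y => unitBump E (c • y)) x :=
    fderiv_fun_mul (hbump x) hf
  have hle : ‖fderiv ℝ (cutoff c f) x‖ ≤ ‖fderiv ℝ f x‖ + |f x| * K := by
    rw [hderiv]
    refine (norm_add_le _ _).trans ?_
    rw [norm_smul, norm_smul, Real.norm_of_nonneg (unitBump E).nonneg, Real.norm_eq_abs]
    gcongr
    · exact mul_le_of_le_one_left (norm_nonneg _) (unitBump E).le_one
    · exact norm_fderiv_le_of_lipschitz ℝ (hK c hc)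
  calc ‖fderiv ℝ (cutoff c f) x‖ ^ 2 ≤ (‖fderiv ℝ f x‖ + |f x| * K) ^ 2 := by gcongr
    _ ≤ 2 * (‖fderiv ℝ f x‖ ^ 2 + (|f x| * K) ^ 2) := add_sq_le
    _ = _ := by rw [mul_pow, sq_abs]; ring

lemma hasCompactSupport_cutoff (hc : c ≠ 0) (f : E → ℝ) : HasCompactSupport (cutoff c f) :=
  ((unitBump E).hasCompactSupport.comp_smul hc).mul_right

lemma locallyLipschitz_cutoff (c : ℝ) (hf : LocallyLipschitz f) :
    LocallyLipschitz (cutoff c f) := by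
  have hbump : ContDiff ℝ 1 fun x => unitBump E (c • x) :=
    (unitBump E).contDiff.comp (contDiff_const_smul c)
  have hmul : ContDiff ℝ 1 fun p : ℝ × ℝ => p.1 * p.2 := contDiff_mul
  exact hmul.locallyLipschitz.comp (hbump.locallyLipschitz.prodMk hf)

lemma exists_abs_le_norm_fderiv_le_of_hasCompactSupport (hg : LocallyLipschitz g)
    (hgc : HasCompactSupport g) : ∃ B, (∀ x, |g x| ≤ B) ∧ ∀ x, ‖fderiv ℝ g x‖ ≤ B := by
  obtain ⟨B, hB⟩ := hgc.exists_bound_of_continuous hg.continuous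
  obtain ⟨R, hR⟩ := hgc.isBounded.subset_ball (0 : E)
  obtain ⟨K, hK⟩ := LocallyLipschitzOn.exists_lipschitzOnWith_of_compact
    (isCompact_closedBall (0 : E) R) hg.locallyLipschitzOn
  refine ⟨max B K, fun x => (hB x).trans (le_max_left _ _), fun x => ?_⟩
  by_cases hx : x ∈ ball (0 : E) R
  · have hnhds := mem_of_superset (isOpen_ball.mem_nhds hx) ball_subset_closedBall
    exact (norm_fderiv_le_of_lipschitzOn ℝ hnhds hK).trans (le_max_right _ _)
  · rw [Function.notMem_support.1 fun h => hx (hR (support_fderiv_subset ℝ h)), norm_zero]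
    exact le_max_of_le_right K.coe_nonneg

variable [MeasurableSpace E] [BorelSpace E] {μ : Measure E}
  {ι : Type*} {l : Filter ι} [l.IsCountablyGenerated] {s : ι → ℝ}

lemma tendsto_integral_cutoff (hs : Tendsto s l (𝓝 0)) (hf : LocallyLipschitz f)
    (hint : Integrable f μ) :
    Tendsto (fun i => ∫ x, cutoff (s i) f x ∂μ) l (𝓝 (∫ x, f x ∂μ)) :=
  tendsto_integral_filter_of_dominated_convergence (fun x => |f x|)
    (.of_forall fun i => (locallyLipschitz_cutoff (s i) hf).continuous.aestronglyMeasurable)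
    (.of_forall fun i => ae_of_all _ (abs_cutoff_le (s i) f)) hint.abs
    (ae_of_all _ fun x => tendsto_const_nhds.congr'
      ((eventually_cutoff_eventuallyEq hs f x).mono fun _ hi => hi.eq_of_nhds.symm))

lemma tendsto_integral_cutoff_sq (hs : Tendsto s l (𝓝 0)) (hf : LocallyLipschitz f)
    (hint : Integrable (fun x => f x ^ 2) μ) :
    Tendsto (fun i => ∫ x, cutoff (s i) f x ^ 2 ∂μ) l (𝓝 (∫ x, f x ^ 2 ∂μ)) := by
  refine tendsto_integral_filter_of_dominated_convergence (fun x => f x ^ 2)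
    (.of_forall fun i =>
      ((locallyLipschitz_cutoff (s i) hf).continuous.pow 2).aestronglyMeasurable)
    (.of_forall fun i => ae_of_all _ fun x => ?_) hint
    (ae_of_all _ fun x => tendsto_const_nhds.congr'
      ((eventually_cutoff_eventuallyEq hs f x).mono fun i hi => by simp only [hi.eq_of_nhds]))
  rw [Real.norm_of_nonneg (sq_nonneg _)]
  exact sq_le_sq.2 (abs_cutoff_le (s i) f x)

lemma tendsto_integral_norm_fderiv_cutoff_sq (hμ : μ ≪ volume) (hs : Tendsto s l (𝓝 0))
    (hf : LocallyLipschitz f) (hint : Integrable (fun x => f x ^ 2) μ)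
    (hgrad : Integrable (fun x => ‖fderiv ℝ f x‖ ^ 2) μ) :
    Tendsto (fun i => ∫ x, ‖fderiv ℝ (cutoff (s i) f) x‖ ^ 2 ∂μ) l
      (𝓝 (∫ x, ‖fderiv ℝ f x‖ ^ 2 ∂μ)) := by
  obtain ⟨K, hK⟩ := exists_norm_fderiv_cutoff_sq_le E
  have hs₁ : ∀ᶠ i in l, |s i| < 1 := hs.abs.eventually_lt_const (by simp)
  refine tendsto_integral_filter_of_dominated_convergence
    (fun x => 2 * ‖fderiv ℝ f x‖ ^ 2 + 2 * K ^ 2 * f x ^ 2)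
    (.of_forall fun i => ((measurable_fderiv ℝ _).norm.pow_const 2).aestronglyMeasurable)
    (hs₁.mono fun i hi => ?_) ((hgrad.const_mul 2).add (hint.const_mul _))
    (ae_of_all _ fun x => tendsto_const_nhds.congr'
      ((eventually_cutoff_eventuallyEq hs f x).mono fun i hi => by simp only [hi.fderiv_eq]))
  filter_upwards [hμ.ae_le (ae_differentiableAt_of_locallyLipschitz hf)] with x hx
  rw [Real.norm_of_nonneg (sq_nonneg _)]
  exact hK (s i) hi.le f x hx

theorem exists_bounded_of_not_satisfiesPoincare [IsProbabilityMeasure μ] (hμ : μ ≪ volume)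
    {C : ℝ} (hC : 0 ≤ C) (hnot : ¬SatisfiesPoincare μ C) :
    ∃ g : E → ℝ, LocallyLipschitz g ∧ (∃ B, (∀ x, |g x| ≤ B) ∧ ∀ x, ‖fderiv ℝ g x‖ ≤ B) ∧
      C * ∫ x, ‖fderiv ℝ g x‖ ^ 2 ∂μ < ∫ x, g x ^ 2 ∂μ - (∫ x, g x ∂μ) ^ 2 := by
  obtain ⟨f, hf, hgrad, hlt⟩ : ∃ f : E → ℝ, LocallyLipschitz f ∧
      Integrable (fun x => ‖fderiv ℝ f x‖ ^ 2) μ ∧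
      C * ∫ x, ‖fderiv ℝ f x‖ ^ 2 ∂μ < ∫ x, f x ^ 2 ∂μ - (∫ x, f x ∂μ) ^ 2 := by
    by_contra! h
    exact hnot ⟨hC, h⟩
  have hsq : Integrable (fun x => f x ^ 2) μ := by
    by_contra hsq
    have hnonneg : 0 ≤ C * ∫ x, ‖fderiv ℝ f x‖ ^ 2 ∂μ := by positivity
    rw [integral_undef hsq] at hlt
    nlinarith [sq_nonneg (∫ x, f x ∂μ)]
  have hmem : MemLp f 2 μ :=
    (memLp_two_iff_integrable_sq hf.continuous.aestronglyMeasurable).2 hsq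
  have hs : Tendsto (fun k : ℕ => 1 / ((k : ℝ) + 1)) atTop (𝓝 0) :=
    tendsto_one_div_add_atTop_nhds_zero_nat
  obtain ⟨k, hk⟩ :=
    (((tendsto_integral_norm_fderiv_cutoff_sq hμ hs hf hsq hgrad).const_mul C).eventually_lt
      ((tendsto_integral_cutoff_sq hs hf hsq).sub
        ((tendsto_integral_cutoff hs hf (hmem.integrable one_le_two)).pow 2)) hlt).exists
  have hg := locallyLipschitz_cutoff (1 / ((k : ℝ) + 1)) hf
  exact ⟨_, hg, exists_abs_le_norm_fderiv_le_of_hasCompactSupport hg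
    (hasCompactSupport_cutoff (by positivity) f), hk⟩

end Cutoff

section RegularPotential

variable [FiniteDimensional ℝ E] [MeasurableSpace E] [BorelSpace E] {ψ ρ : E → ℝ} {m s : ℝ}

lemma strongConvexOn_normalize (hψ : StrongConvexOn univ m ψ) :
    StrongConvexOn univ m (normalize ψ) := by
  rw [strongConvexOn_iff_convex] at hψ ⊢
  exact (hψ.add_const (log (∫ y, exp (-ψ y)))).congr fun x _ => sub_add_eq_add_sub _ _ _

lemma strongConcaveOn_normalize (hψ : StrongConcaveOn univ m ψ) :
    StrongConcaveOn univ m (normalize ψ) := by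
  rw [strongConcaveOn_iff_convex] at hψ ⊢
  exact (hψ.add_const (log (∫ y, exp (-ψ y)))).congr fun x _ => add_right_comm _ _ _

/-- The potentials of regular probability measures on an inner product space, with the two-sided
bound on the Hessian expressed by strong convexity and strong concavity. -/
structure IsNormalizedRegularPotential (ψ : E → ℝ) : Prop where
  hasTemperateGrowth : ψ.HasTemperateGrowth
  exists_strongConvexOn : ∃ r, 0 < r ∧ StrongConvexOn univ r ψ
  exists_strongConcaveOn : ∃ Λ, 0 < Λ ∧ StrongConcaveOn univ (-Λ) ψ
  integral_exp_neg : ∫ x, exp (-ψ x) = 1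

lemma IsStronglyLogConcaveFun.isNormalizedRegularPotential
    (hslc : IsStronglyLogConcaveFun 0 ρ) (hint : Integrable ρ) (hI : ∫ x, ρ x ≠ 0)
    (b : ContDiffBump (0 : E)) :
    IsNormalizedRegularPotential (normalize (approxPotential ρ b)) where
  hasTemperateGrowth :=
    (hslc.hasTemperateGrowth_approxPotential (hslc.isBoundedWeight hint hI) b).add (.const _)
  exists_strongConvexOn := by
    have hb := b.rOut_pos
    exact ⟨_, by positivity, strongConvexOn_normalize
      (hslc.strongConvexOn_approxPotential (hslc.isBoundedWeight hint hI) le_rfl b)⟩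
  exists_strongConcaveOn := ⟨_, one_div_pos.2 b.rOut_pos, strongConcaveOn_normalize
    ((hslc.isBoundedWeight hint hI).strongConcaveOn_approxPotential b)⟩
  integral_exp_neg :=
    integral_exp_neg_normalize (integrable_exp_neg_approxPotential hslc hint hI b)

theorem IsStronglyLogConcaveFun.exists_tendstoPolyGrowth (hslc : IsStronglyLogConcaveFun s ρ)
    (hs : 0 ≤ s) (hI : ∫ x, ρ x = 1) :
    ∃ ψ : ℕ → E → ℝ, (∀ k, IsNormalizedRegularPotential (ψ k)) ∧
      (∀ r < s, ∀ᶠ k in atTop, StrongConvexOn univ r (ψ k)) ∧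
      TendstoPolyGrowth (fun k => gibbsMeasure (ψ k)) atTop
        (volume.withDensity fun x => ENNReal.ofReal (ρ x)) := by
  have hint := integrable_of_integral_eq_one hI
  have hI₀ : ∫ x, ρ x ≠ 0 := hI ▸ one_ne_zero
  have hslc₀ : IsStronglyLogConcaveFun 0 ρ := hslc.mono hs
  set l : ℕ → ℝ := fun k => 1 / (k + 1)
  have hl : ∀ k, 0 < l k := fun k => by positivity
  have hlim : Tendsto l atTop (𝓝 0) := tendsto_one_div_add_atTop_nhds_zero_nat
  let b : ℕ → ContDiffBump (0 : E) := fun k =>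
    ⟨l k / 2, l k, half_pos (hl k), half_lt_self (hl k)⟩
  refine ⟨fun k => normalize (approxPotential ρ (b k)),
    fun k => hslc₀.isNormalizedRegularPotential hint hI₀ (b k), fun r hr => ?_,
    tendstoPolyGrowth_gibbsMeasure_approxPotential hslc₀ hI hlim⟩
  have hrate : Tendsto (fun k => (s + l k) / (1 + l k * (s + l k))) atTop (𝓝 s) := by
    have hadd : Tendsto (fun k => s + l k) atTop (𝓝 s) := by simpa using hlim.const_add s
    have hden : Tendsto (fun k => 1 + l k * (s + l k)) atTop (𝓝 1) := by
      simpa using (hlim.mul hadd).const_add 1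
    have hdiv := hadd.div hden one_ne_zero
    rwa [div_one] at hdiv
  filter_upwards [hrate.eventually_const_lt hr] with k hk
  exact (strongConvexOn_normalize (hslc.strongConvexOn_approxPotential
    (hslc₀.isBoundedWeight hint hI₀) hs (b k))).mono hk.le

end RegularPotential

section PoincareLimit

lemma hasPolyGrowth_of_norm_le {F : Type*} [NormedAddCommGroup F] {f : F → ℝ} {B : ℝ}
    (hf : ∀ x, ‖f x‖ ≤ B) : HasPolyGrowth f :=
  ⟨0, B, by simpa using hf⟩

variable [FiniteDimensional ℝ E] [MeasurableSpace E] [BorelSpace E]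

theorem TendstoPolyGrowth.eventually_lt_of_not_satisfiesPoincare {ι : Type*} {ν : ι → Measure E}
    {L : Filter ι} {μ : Measure E} [IsProbabilityMeasure μ] [∀ i, IsFiniteMeasure (ν i)]
    (hν : TendstoPolyGrowth ν L μ) (hμ : μ ≪ volume) {C : ℝ} (hC : 0 ≤ C)
    (hnot : ¬SatisfiesPoincare μ C) : ∀ᶠ i in L, ∀ D, SatisfiesPoincare (ν i) D → C < D := by
  obtain ⟨g, hg, ⟨B, hB, hB'⟩, hlt⟩ := exists_bounded_of_not_satisfiesPoincare hμ hC hnot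
  have hgm : Measurable g := hg.continuous.measurable
  have hgm' : Measurable fun x => ‖fderiv ℝ g x‖ ^ 2 := (measurable_fderiv ℝ g).norm.pow_const 2
  have hsq : ∀ x, ‖g x ^ 2‖ ≤ B ^ 2 := fun x => by
    rw [norm_pow]
    exact pow_le_pow_left₀ (norm_nonneg _) (hB x) 2
  have hgrad : ∀ x, ‖‖fderiv ℝ g x‖ ^ 2‖ ≤ B ^ 2 := fun x => by
    rw [norm_pow, norm_norm]
    exact pow_le_pow_left₀ (norm_nonneg _) (hB' x) 2
  have hmean := hν g hgm (hasPolyGrowth_of_norm_le hB)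
  have hsecond := hν _ (hgm.pow_const 2) (hasPolyGrowth_of_norm_le hsq)
  have henergy := hν _ hgm' (hasPolyGrowth_of_norm_le hgrad)
  filter_upwards [(henergy.const_mul C).eventually_lt (hsecond.sub (hmean.pow 2)) hlt]
    with i hi D hD
  have hint : Integrable (fun x => ‖fderiv ℝ g x‖ ^ 2) (ν i) :=
    .of_bound hgm'.aestronglyMeasurable (B ^ 2) (ae_of_all _ hgrad)
  exact lt_of_mul_lt_mul_right (hi.trans_le (hD.2 g hg hint)) (by positivity)

end PoincareLimit

section EuclideanSpace

variable {n : ℕ} {μ : Measure (Euc n)} {ψ : Euc n → ℝ}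

lemma mem_poincareSet_iff {C : ℝ} : C ∈ poincareSet μ ↔ SatisfiesPoincare μ C := by
  have hnorm : ∀ (f : Euc n → ℝ) x, ‖gradient f x‖ = ‖fderiv ℝ f x‖ := fun f x => by
    simp [gradient]
  simp only [poincareSet, SatisfiesPoincare, hnorm, mem_ofPred_eq]

theorem TendstoPolyGrowth.eventually_sub_le_poincareConst {ι : Type*} {ν : ι → Measure (Euc n)}
    {L : Filter ι} [IsProbabilityMeasure μ] [∀ i, IsFiniteMeasure (ν i)]
    (hν : TendstoPolyGrowth ν L μ) (hμ : μ ≪ volume) (hne : ∀ i, (poincareSet (ν i)).Nonempty)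
    {ε : ℝ} (hε : 0 < ε) : ∀ᶠ i in L, poincareConst μ - ε ≤ poincareConst (ν i) := by
  rcases lt_or_ge (poincareConst μ - ε) 0 with hneg | hnonneg
  · exact .of_forall fun i => hneg.le.trans (Real.sInf_nonneg fun C hC => hC.1)
  have hnot : ¬SatisfiesPoincare μ (poincareConst μ - ε) := fun h =>
    (sub_lt_self _ hε).not_ge (csInf_le ⟨0, fun C hC => hC.1⟩ (mem_poincareSet_iff.2 h))
  filter_upwards [hν.eventually_lt_of_not_satisfiesPoincare hμ hnonneg hnot] with i hi
  exact le_csInf (hne i) fun D hD => (hi D (mem_poincareSet_iff.1 hD)).le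

lemma continuous_opNorm : Continuous (opNorm (n := n)) :=
  (LinearMap.continuous_of_finiteDimensional
    (Matrix.toEuclideanCLM (n := Fin n) (𝕜 := ℝ)).toAlgEquiv.toLinearMap).norm

theorem TendstoPolyGrowth.tendsto_opNorm_covMatrix_sub {ι : Type*} {ν : ι → Measure (Euc n)}
    {L : Filter ι} (hν : TendstoPolyGrowth ν L μ) :
    Tendsto (fun i => opNorm (covMatrix μ - covMatrix (ν i))) L (𝓝 0) := by
  have hcoord : ∀ (x : Euc n) i, ‖x i‖ ≤ 1 + ‖x‖ := fun x i =>
    (PiLp.norm_apply_le x i).trans (le_add_of_nonneg_left zero_le_one)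
  have hmean : ∀ i, Tendsto (fun k => ∫ x, x i ∂ν k) L (𝓝 (∫ x, x i ∂μ)) := fun i =>
    hν (fun x => x i) (by fun_prop) ⟨1, 1, fun x => by simpa using hcoord x i⟩
  have hprod : ∀ i j, Tendsto (fun k => ∫ x, x i * x j ∂ν k) L (𝓝 (∫ x, x i * x j ∂μ)) :=
    fun i j => hν (fun x => x i * x j) (by fun_prop) ⟨2, 1, fun x => by
      rw [norm_mul, one_mul, sq]
      exact mul_le_mul (hcoord x i) (hcoord x j) (norm_nonneg _) (by positivity)⟩
  have hcov : Tendsto (fun k => covMatrix (ν k)) L (𝓝 (covMatrix μ)) :=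
    tendsto_pi_nhds.2 fun i => tendsto_pi_nhds.2 fun j =>
      (hprod i j).sub ((hmean i).mul (hmean j))
  have hsub : Tendsto (fun k => covMatrix μ - covMatrix (ν k)) L (𝓝 0) := by
    simpa using hcov.const_sub (covMatrix μ)
  exact (continuous_opNorm.tendsto' _ _ (by simp [opNorm])).comp hsub

lemma isLogConcaveFun_exp_neg (hψ : ConvexOn ℝ univ ψ) : IsLogConcaveFun fun x => exp (-ψ x) := by
  refine ⟨fun x => (exp_pos _).le, fun x y a b ha hb hab => ?_⟩
  have hle := hψ.2 (mem_univ x) (mem_univ y) ha hb hab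
  simp only [smul_eq_mul] at hle
  rw [← exp_mul, ← exp_mul, ← exp_add]
  exact exp_le_exp.2 (by linarith)

lemma uniformlyLogConcave_gibbsMeasure {r : ℝ} (hψ : StrongConvexOn univ r ψ) :
    UniformlyLogConcave r (gibbsMeasure ψ) := by
  have hc : Continuous ψ := continuous_of_strongConvexOn hψ
  refine ⟨fun x => exp (-(ψ x - r / 2 * ‖x‖ ^ 2)), by fun_prop,
    isLogConcaveFun_exp_neg (strongConvexOn_iff_convex.1 hψ), ?_⟩
  rw [gibbsMeasure]
  congr with x
  rw [← exp_add]
  congr 2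
  ring

namespace IsNormalizedRegularPotential

lemma isProbabilityMeasure (hψ : IsNormalizedRegularPotential ψ) :
    IsProbabilityMeasure (gibbsMeasure ψ) :=
  isProbabilityMeasure_gibbsMeasure hψ.integral_exp_neg

lemma isLogConcaveMeasure (hψ : IsNormalizedRegularPotential ψ) :
    IsLogConcaveMeasure (gibbsMeasure ψ) := by
  obtain ⟨r, hr, hconv⟩ := hψ.exists_strongConvexOn
  have hc : Continuous ψ := hψ.hasTemperateGrowth.1.continuous
  exact ⟨_, by fun_prop, isLogConcaveFun_exp_neg (strongConvexOn_zero.1 (hconv.mono hr.le)), rfl⟩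

lemma nonempty_poincareSet (hψ : IsNormalizedRegularPotential ψ) :
    (poincareSet (gibbsMeasure ψ)).Nonempty := by
  obtain ⟨r, hr, hconv⟩ := hψ.exists_strongConvexOn
  obtain ⟨C, hC⟩ := exists_satisfiesPoincare_gibbsMeasure hr hconv hψ.integral_exp_neg
  exact ⟨C, mem_poincareSet_iff.2 hC⟩

lemma isRegularPotential (hψ : IsNormalizedRegularPotential ψ) : IsRegularPotential ψ := by
  obtain ⟨r, hr, hconv⟩ := hψ.exists_strongConvexOn
  obtain ⟨Λ, hΛ, hconc⟩ := hψ.exists_strongConcaveOn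
  have hsmooth : ContDiff ℝ 2 ψ := contDiff_infty.1 hψ.hasTemperateGrowth.1 2
  have hsmooth' : ContDiff ℝ 2 (-ψ) := hsmooth.neg
  have hconv' : StrongConvexOn univ (-Λ) (-ψ) := by simpa using! hconc.neg
  refine ⟨hψ.hasTemperateGrowth.1, ⟨min r Λ⁻¹, by positivity, fun x v => ⟨?_, ?_⟩⟩,
    fun k => exists_comm.1 (hψ.hasTemperateGrowth.2 k)⟩
  · exact (by gcongr; exact min_le_left _ _ : _ ≤ r * ‖v‖ ^ 2).trans
      (le_iteratedFDeriv_two_of_strongConvexOn hsmooth hconv x v)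
  · have hle := le_iteratedFDeriv_two_of_strongConvexOn hsmooth' hconv' x v
    rw [iteratedFDeriv_neg_apply, neg_apply, neg_mul] at hle
    refine (neg_le_neg_iff.1 hle).trans ?_
    gcongr
    exact le_inv_of_le_inv₀ (by positivity) (min_le_right _ _)

end IsNormalizedRegularPotential

lemma integral_eq_one_of_isProbabilityMeasure_withDensity {α : Type*} [MeasurableSpace α]
    {ν : Measure α} {p : α → ℝ} (hp : AEStronglyMeasurable p ν) (hp₀ : ∀ x, 0 ≤ p x)
    [hν : IsProbabilityMeasure (ν.withDensity fun x => ENNReal.ofReal (p x))] :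
    ∫ x, p x ∂ν = 1 := by
  have hmass := hν.measure_univ
  rw [withDensity_apply _ .univ, Measure.restrict_univ] at hmass
  rw [integral_eq_lintegral_of_nonneg_ae (ae_of_all _ hp₀) hp, hmass, ENNReal.toReal_one]

theorem IsStronglyLogConcaveFun.exists_isRegularMeasure {ρ : Euc n → ℝ} {s : ℝ}
    (hρ : IsStronglyLogConcaveFun s ρ) (hρm : Measurable ρ) (hs : 0 ≤ s)
    [IsProbabilityMeasure μ] (hμ : μ = volume.withDensity fun x => ENNReal.ofReal (ρ x))
    {ε : ℝ} (hε : 0 < ε) :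
    ∃ ν : Measure (Euc n), IsProbabilityMeasure ν ∧ (∃ ψ, IsRegularMeasure ν ψ) ∧
      IsLogConcaveMeasure ν ∧ poincareConst μ - ε ≤ poincareConst ν ∧
      opNorm (covMatrix μ - covMatrix ν) < ε ∧ UniformlyLogConcave (s - ε) ν := by
  subst hμ
  have hI : ∫ x, ρ x = 1 :=
    integral_eq_one_of_isProbabilityMeasure_withDensity hρm.aestronglyMeasurable hρ.1
  obtain ⟨ψ, hψ, hconv, hlim⟩ := hρ.exists_tendstoPolyGrowth hs hI
  have hprob : ∀ k, IsProbabilityMeasure (gibbsMeasure (ψ k)) := fun k =>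
    (hψ k).isProbabilityMeasure
  obtain ⟨k, hpoincare, hcov, hk⟩ :=
    ((hlim.eventually_sub_le_poincareConst (withDensity_absolutelyContinuous _ _)
      (fun k => (hψ k).nonempty_poincareSet) hε).and
      ((hlim.tendsto_opNorm_covMatrix_sub.eventually_lt_const hε).and
        (hconv (s - ε) (sub_lt_self s hε)))).exists
  exact ⟨_, hprob k, ⟨ψ k, (hψ k).isRegularPotential, rfl⟩, (hψ k).isLogConcaveMeasure, hpoincare,
    hcov, uniformlyLogConcave_gibbsMeasure hk⟩

end EuclideanSpace

end

end RegularApproximation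

/-- Approximation by regular log-concave measures (Lemma on regularization). -/
theorem approximation_lemma {n : ℕ} (μ : Measure (Euc n)) [IsProbabilityMeasure μ]
    (hμ : IsLogConcaveMeasure μ) (ε t : ℝ) (hε : 0 < ε) (hεt : ε < t) :
    ∃ ν : Measure (Euc n), IsProbabilityMeasure ν ∧
      (∃ ψ : Euc n → ℝ, IsRegularMeasure ν ψ) ∧ IsLogConcaveMeasure ν ∧
      poincareConst μ - ε ≤ poincareConst ν ∧
      opNorm (covMatrix μ - covMatrix ν) < ε ∧
      (UniformlyLogConcave t μ → UniformlyLogConcave (t - ε) ν) := by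
  by_cases ht : UniformlyLogConcave t μ
  · obtain ⟨g, hgm, hg, hμg⟩ := ht
    have hρ := (RegularApproximation.isStronglyLogConcaveFun_zero_iff.2 hg).exp_neg_sq_mul t
    rw [zero_add] at hρ
    obtain ⟨ν, hprob, hreg, hlc, hpoincare, hcov, hulc⟩ :=
      hρ.exists_isRegularMeasure (by fun_prop) (hε.trans hεt).le hμg hε
    exact ⟨ν, hprob, hreg, hlc, hpoincare, hcov, fun _ => hulc⟩
  · obtain ⟨ρ, hρm, hρ, hμρ⟩ := hμ
    obtain ⟨ν, hprob, hreg, hlc, hpoincare, hcov, -⟩ :=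
      (RegularApproximation.isStronglyLogConcaveFun_zero_iff.2 hρ).exists_isRegularMeasure hρm
        le_rfl hμρ hε
    exact ⟨ν, hprob, hreg, hlc, hpoincare, hcov, fun h => absurd h ht⟩
end

section
/- Let μ be a probability measure on ℝⁿ with a regular, log-concave density ρ = e^{−ψ}, let λ = 1/C_P(μ), and let f be a μ-tempered function with ∫ f dμ = 0, ∫ f² dμ = 1 and L_μ f = −λ f, where L_μ u = Δu − ⟨∇ψ, ∇u⟩. Then |∫ ∇f dμ|² ≥ (1/λ) ∫ ⟨(∇²ψ) ∇f, ∇f⟩ dμ. -/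
open MeasureTheory Real
open scoped ENNReal RealInnerProductSpace

/-!
For a direction `v` the commutator of the generator `L = Δ - ⟨∇ψ, ∇·⟩` with `∂ᵥ` is
`L ∂ᵥf = ∂ᵥ L f + D²ψ(v, ∇f)`. If `L f = -κ f`, Green's formula `∫ u L w dμ = -∫ ⟨∇u, ∇w⟩ dμ` for
`u = w = ∂ᵥf` therefore gives
`∫ |∇∂ᵥf|² dμ = κ ∫ (∂ᵥf)² dμ - ∫ ∂ᵥf · D²ψ(v, ∇f) dμ`,
and the Poincaré inequality with constant `C` for `∂ᵥf` becomes
`C ∫ ∂ᵥf · D²ψ(v, ∇f) dμ + (1 - C κ) ∫ (∂ᵥf)² dμ ≤ (∫ ∂ᵥf dμ)²`.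
Summing over an orthonormal basis of directions yields the claim, since `C κ ≤ 1` for `κ = 1 / C`.
Polynomial growth of the derivatives of `ψ` against the exponential decay of `e^{-ψ/2} |Dᵐf|` puts
all factors into `L²(μ)`, which justifies the integrations by parts.
-/

open scoped ContDiff

section DirDeriv

variable {E F : Type*} [NormedAddCommGroup E] [NormedSpace ℝ E] [NormedAddCommGroup F]
  [NormedSpace ℝ F] {u : E → F}

/-- The directional derivative `∂ᵥu`. The direction comes first so that `dirDeriv v` is an operator
on functions, which can be iterated and commuted with others; `u` is meant to be differentiable,
the value being `0` where it is not. -/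
noncomputable def dirDeriv (v : E) (u : E → F) (x : E) : F :=
  fderiv ℝ u x v

theorem contDiff_dirDeriv {m k : ℕ∞ω} (hu : ContDiff ℝ k u) (hmk : m + 1 ≤ k) (v : E) :
    ContDiff ℝ m (dirDeriv v u) :=
  (hu.fderiv_right hmk).clm_apply contDiff_const

theorem fderiv_dirDeriv (hu : ContDiff ℝ 2 u) (v w x : E) :
    fderiv ℝ (dirDeriv v u) x w = fderiv ℝ (fderiv ℝ u) x w v := by
  have hdu : DifferentiableAt ℝ (fderiv ℝ u) x :=
    (hu.fderiv_right (m := 1) (by norm_num)).differentiable (by norm_num) x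
  unfold dirDeriv
  rw [fderiv_clm_apply hdu (by fun_prop)]
  simp

theorem dirDeriv_comm (hu : ContDiff ℝ 2 u) (v w : E) :
    dirDeriv v (dirDeriv w u) = dirDeriv w (dirDeriv v u) := by
  ext x
  have hsymm : IsSymmSndFDerivAt ℝ u x := hu.contDiffAt.isSymmSndFDerivAt (by simp)
  rw [dirDeriv, dirDeriv, fderiv_dirDeriv hu, fderiv_dirDeriv hu, hsymm.eq]

theorem dirDeriv_dirDeriv_eq_iteratedFDeriv (hu : ContDiff ℝ 2 u) (v w x : E) :
    dirDeriv v (dirDeriv w u) x = iteratedFDeriv ℝ 2 u x ![v, w] := by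
  rw [dirDeriv, fderiv_dirDeriv hu, iteratedFDeriv_two_apply]
  simp

theorem norm_iteratedFDeriv_dirDeriv_le {m : ℕ} (hu : ContDiff ℝ (m + 1) u) (v x : E) :
    ‖iteratedFDeriv ℝ m (dirDeriv v u) x‖ ≤ ‖v‖ * ‖iteratedFDeriv ℝ (m + 1) u x‖ := by
  have h := norm_iteratedFDeriv_clm_apply_const (n := m) (c := v) (x := x)
    (hu.fderiv_right le_rfl).contDiffAt le_rfl
  rwa [norm_iteratedFDeriv_fderiv] at h

theorem hasTemperateGrowth_dirDeriv (hu : u.HasTemperateGrowth) (v : E) :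
    (dirDeriv v u).HasTemperateGrowth := by
  refine ⟨contDiff_dirDeriv hu.1 (by simp) v, fun m => ?_⟩
  obtain ⟨k, C, hC⟩ := hu.2 (m + 1)
  have hdiff : ContDiff ℝ (m + 1) u := by exact_mod_cast contDiff_infty.1 hu.1 (m + 1)
  refine ⟨k, ‖v‖ * C, fun x => (norm_iteratedFDeriv_dirDeriv_le hdiff v x).trans ?_⟩
  rw [mul_assoc]
  gcongr
  exact hC x

end DirDeriv

section Gradient

variable {E : Type*} [NormedAddCommGroup E] [InnerProductSpace ℝ E] [CompleteSpace E]
  {ι : Type*} [Fintype ι] {u w : E → ℝ}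

theorem inner_gradient_eq_dirDeriv (u : E → ℝ) (v x : E) : ⟪gradient u x, v⟫ = dirDeriv v u x :=
  inner_gradient_left

theorem inner_gradient_gradient_eq_sum (b : OrthonormalBasis ι ℝ E) (u w : E → ℝ) (x : E) :
    ⟪gradient u x, gradient w x⟫ = ∑ i, dirDeriv (b i) u x * dirDeriv (b i) w x := by
  rw [← b.sum_inner_mul_inner]
  simp only [real_inner_comm (gradient w x), inner_gradient_eq_dirDeriv]

theorem norm_gradient_sq_eq_sum (b : OrthonormalBasis ι ℝ E) (u : E → ℝ) (x : E) :
    ‖gradient u x‖ ^ 2 = ∑ i, dirDeriv (b i) u x ^ 2 := by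
  simp only [← b.sum_sq_inner_left, inner_gradient_eq_dirDeriv]

theorem inner_gradient_dirDeriv_eq_iteratedFDeriv (hu : ContDiff ℝ 2 u) (v w x : E) :
    ⟪gradient (dirDeriv v u) x, w⟫ = iteratedFDeriv ℝ 2 u x ![v, w] := by
  rw [inner_gradient_eq_dirDeriv, dirDeriv_comm hu, dirDeriv_dirDeriv_eq_iteratedFDeriv hu]

theorem iteratedFDeriv_two_gradient_eq_sum (b : OrthonormalBasis ι ℝ E) (u f : E → ℝ) (w x : E) :
    iteratedFDeriv ℝ 2 u x ![gradient f x, w] =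
      ∑ i, dirDeriv (b i) f x * iteratedFDeriv ℝ 2 u x ![b i, w] := by
  have hf : gradient f x = ∑ i, dirDeriv (b i) f x • b i := by
    rw [← b.sum_repr (gradient f x)]
    simp only [b.repr_apply_apply, real_inner_comm (gradient f x), inner_gradient_eq_dirDeriv]
  simp [iteratedFDeriv_two_apply, hf]

theorem differentiable_gradient (hu : ContDiff ℝ 2 u) : Differentiable ℝ (gradient u) :=
  (InnerProductSpace.toDual ℝ E).symm.differentiable.comp
    ((hu.fderiv_right (m := 1) (by norm_num)).differentiable (by norm_num))

theorem dirDeriv_gradient (hu : ContDiff ℝ 2 u) (v : E) :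
    dirDeriv v (gradient u) = gradient (dirDeriv v u) := by
  ext1 x
  refine ext_inner_right ℝ fun z => ?_
  have hinner : ⟪dirDeriv v (gradient u) x, z⟫ = dirDeriv v (fun y => ⟪gradient u y, z⟫) x := by
    rw [dirDeriv, dirDeriv,
      fderiv_inner_apply ℝ (differentiable_gradient hu x) (differentiableAt_const z)]
    simp
  simp only [hinner, inner_gradient_eq_dirDeriv]
  exact congrFun (dirDeriv_comm hu v z) x

theorem dirDeriv_inner_gradient (hu : ContDiff ℝ 2 u) (hw : ContDiff ℝ 2 w) (v x : E) :
    dirDeriv v (fun y => ⟪gradient u y, gradient w y⟫) x =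
      ⟪gradient u x, gradient (dirDeriv v w) x⟫ + ⟪gradient (dirDeriv v u) x, gradient w x⟫ := by
  rw [← dirDeriv_gradient hu, ← dirDeriv_gradient hw]
  exact fderiv_inner_apply ℝ (differentiable_gradient hu x) (differentiable_gradient hw x) v

end Gradient

section Generator

variable {n : ℕ} {ι : Type*} [Fintype ι] {ψ u : Euc n → ℝ}

theorem lap_eq_sum_dirDeriv (b : OrthonormalBasis ι ℝ (Euc n)) (hu : ContDiff ℝ 2 u) (x : Euc n) :
    lap u x = ∑ i, dirDeriv (b i) (dirDeriv (b i) u) x := by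
  simp only [dirDeriv_dirDeriv_eq_iteratedFDeriv hu]
  rw [← congrFun (InnerProductSpace.laplacian_eq_iteratedFDeriv_orthonormalBasis u b) x,
    congrFun (InnerProductSpace.laplacian_eq_iteratedFDeriv_orthonormalBasis u
      (EuclideanSpace.basisFun (Fin n) ℝ)) x]
  simp [lap]

theorem lop_eq_sum_dirDeriv (b : OrthonormalBasis ι ℝ (Euc n)) (hu : ContDiff ℝ 2 u) (x : Euc n) :
    Lop ψ u x = ∑ i, (dirDeriv (b i) (dirDeriv (b i) u) x -
      dirDeriv (b i) ψ x * dirDeriv (b i) u x) := by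
  rw [Lop, lap_eq_sum_dirDeriv b hu, inner_gradient_gradient_eq_sum b, Finset.sum_sub_distrib]

theorem contDiff_lap {m : ℕ∞ω} (hu : ContDiff ℝ (m + 2) u) : ContDiff ℝ m (lap u) := by
  set b := EuclideanSpace.basisFun (Fin n) ℝ
  rw [funext (lap_eq_sum_dirDeriv b (hu.of_le le_add_self))]
  refine ContDiff.sum fun i _ => contDiff_dirDeriv (k := m + 1) ?_ le_rfl (b i)
  exact contDiff_dirDeriv hu (by rw [add_assoc, one_add_one_eq_two]) (b i)

theorem dirDeriv_lap (hu : ContDiff ℝ 3 u) (v x : Euc n) :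
    dirDeriv v (lap u) x = lap (dirDeriv v u) x := by
  set b := EuclideanSpace.basisFun (Fin n) ℝ
  have hu₂ : ContDiff ℝ 2 u := hu.of_le (by norm_num)
  have hdu (w : Euc n) : ContDiff ℝ 2 (dirDeriv w u) := contDiff_dirDeriv hu (by norm_num) w
  have hddu (i : Fin n) : DifferentiableAt ℝ (dirDeriv (b i) (dirDeriv (b i) u)) x :=
    (contDiff_dirDeriv (m := 1) (hdu (b i)) (by norm_num) (b i)).differentiable (by norm_num) x
  rw [funext (lap_eq_sum_dirDeriv b hu₂), dirDeriv, fderiv_fun_sum fun i _ => hddu i, sum_apply,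
    lap_eq_sum_dirDeriv b (hdu v)]
  refine Finset.sum_congr rfl fun i _ => ?_
  rw [dirDeriv_comm hu₂ (b i) v, dirDeriv_comm (hdu (b i)) (b i) v, dirDeriv]

theorem lop_dirDeriv (hψ : ContDiff ℝ 2 ψ) (hu : ContDiff ℝ 3 u) (v x : Euc n) :
    Lop ψ (dirDeriv v u) x =
      dirDeriv v (Lop ψ u) x + iteratedFDeriv ℝ 2 ψ x ![v, gradient u x] := by
  have hu₂ : ContDiff ℝ 2 u := hu.of_le (by norm_num)
  have hlap : Differentiable ℝ (lap u) :=
    (contDiff_lap (m := 1) (by convert hu using 1; norm_num)).differentiable (by norm_num)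
  have hinner : Differentiable ℝ fun y => ⟪gradient ψ y, gradient u y⟫ :=
    (differentiable_gradient hψ).inner ℝ (differentiable_gradient hu₂)
  have hsplit : dirDeriv v (Lop ψ u) x =
      dirDeriv v (lap u) x - dirDeriv v (fun y => ⟪gradient ψ y, gradient u y⟫) x := by
    simp only [dirDeriv]
    exact congrArg (· v) (fderiv_fun_sub (hlap x) (hinner x))
  rw [hsplit, dirDeriv_lap hu, dirDeriv_inner_gradient hψ hu₂,
    inner_gradient_dirDeriv_eq_iteratedFDeriv hψ, Lop]
  ring

end Generator

section ExponentialDecay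

theorem one_add_pow_mul_exp_neg_le (k : ℕ) {a t : ℝ} (ha : 0 < a) (ht : 0 ≤ t) :
    (1 + t) ^ k * exp (-a * t) ≤ k.factorial / a ^ k * exp a := by
  have h : (a * (1 + t)) ^ k / k.factorial ≤ exp (a * (1 + t)) :=
    pow_div_factorial_le_exp (a * (1 + t)) (by positivity) k
  have hpow : (1 + t) ^ k ≤ k.factorial / a ^ k * exp (a * (1 + t)) := by
    rw [div_le_iff₀ (by positivity), mul_pow] at h
    rw [div_mul_eq_mul_div, le_div_iff₀ (by positivity)]
    linarith
  calc (1 + t) ^ k * exp (-a * t)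
      ≤ k.factorial / a ^ k * exp (a * (1 + t)) * exp (-a * t) := by gcongr
    _ = k.factorial / a ^ k * exp a := by
        rw [mul_assoc, ← exp_add]
        ring_nf

variable {E : Type*} [NormedAddCommGroup E] [NormedSpace ℝ E] [FiniteDimensional ℝ E]
  [MeasurableSpace E] [BorelSpace E]

theorem integrable_one_add_norm_pow_mul_exp_neg (μ : Measure E) [μ.IsAddHaarMeasure]
    (k : ℕ) {a : ℝ} (ha : 0 < a) :
    Integrable (fun x : E => (1 + ‖x‖) ^ k * exp (-a * ‖x‖)) μ := by
  set d := Module.finrank ℝ E + 1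
  have hint : Integrable (fun x : E => (1 + ‖x‖) ^ (-(d : ℝ))) μ :=
    integrable_one_add_norm (by simp [d])
  refine (hint.const_mul ((k + d).factorial / a ^ (k + d) * exp a)).mono' (by fun_prop)
    (.of_forall fun x => ?_)
  rw [norm_of_nonneg (by positivity), rpow_neg (by positivity), rpow_natCast, ← div_eq_mul_inv,
    le_div_iff₀ (by positivity)]
  calc (1 + ‖x‖) ^ k * exp (-a * ‖x‖) * (1 + ‖x‖) ^ d
      = (1 + ‖x‖) ^ (k + d) * exp (-a * ‖x‖) := by ring
    _ ≤ _ := one_add_pow_mul_exp_neg_le (k + d) ha (norm_nonneg x)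

end ExponentialDecay

section GibbsMeasure

variable {E F : Type*} [MeasureSpace E] [NormedAddCommGroup F] [NormedSpace ℝ F] {ψ : E → ℝ}

/-- The measure `e^{-ψ} dx` with potential `ψ`. It is not normalised. -/
noncomputable def gibbsMeasure (ψ : E → ℝ) : Measure E :=
  volume.withDensity fun x => ENNReal.ofReal (exp (-ψ x))

theorem integrable_gibbsMeasure_iff (hψ : Measurable ψ) {g : E → F} :
    Integrable g (gibbsMeasure ψ) ↔ Integrable fun x => exp (-ψ x) • g x := by
  rw [gibbsMeasure, integrable_withDensity_iff_integrable_smul' (by fun_prop)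
    (.of_forall fun _ => ENNReal.ofReal_lt_top)]
  simp only [ENNReal.toReal_ofReal (exp_pos _).le]

theorem integral_gibbsMeasure (hψ : Measurable ψ) (g : E → F) :
    ∫ x, g x ∂gibbsMeasure ψ = ∫ x, exp (-ψ x) • g x := by
  rw [gibbsMeasure, integral_withDensity_eq_integral_toReal_smul (by fun_prop)
    (.of_forall fun _ => ENNReal.ofReal_lt_top)]
  simp only [ENNReal.toReal_ofReal (exp_pos _).le]

end GibbsMeasure

section WeightedIntegration

variable {E F : Type*} [NormedAddCommGroup E] [NormedSpace ℝ E] [FiniteDimensional ℝ E]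
  [MeasureSpace E] [BorelSpace E] [(volume : Measure E).IsAddHaarMeasure]
  [NormedAddCommGroup F] {ψ : E → ℝ}

theorem memLp_two_gibbsMeasure_of_norm_le (hψ : Measurable ψ) {g : E → F}
    (hg : AEStronglyMeasurable g (gibbsMeasure ψ)) {C a : ℝ} (ha : 0 < a) {k : ℕ}
    (hbound : ∀ x, ‖g x‖ ≤ C * (1 + ‖x‖) ^ k * (exp (ψ x / 2) * exp (-a * ‖x‖))) :
    MemLp g 2 (gibbsMeasure ψ) := by
  rw [memLp_two_iff_integrable_sq_norm hg]
  have hdom : Integrable (fun x => C ^ 2 * ((1 + ‖x‖) ^ (2 * k) * exp (-(2 * a) * ‖x‖)) * exp (ψ x))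
      (gibbsMeasure ψ) := by
    rw [integrable_gibbsMeasure_iff hψ]
    refine ((integrable_one_add_norm_pow_mul_exp_neg volume (2 * k) (a := 2 * a)
      (by positivity)).const_mul (C ^ 2)).congr (.of_forall fun x => ?_)
    simp only [smul_eq_mul, mul_left_comm (exp (-ψ x)), ← exp_add, neg_add_cancel, exp_zero,
      mul_one]
  refine hdom.mono' (hg.norm.pow 2) (.of_forall fun x => ?_)
  have hsq (t : ℝ) : exp (2 * t) = exp t ^ 2 := by rw [← exp_nat_mul, Nat.cast_ofNat]
  calc ‖‖g x‖ ^ 2‖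
      = ‖g x‖ ^ 2 := norm_of_nonneg (by positivity)
    _ ≤ (C * (1 + ‖x‖) ^ k * (exp (ψ x / 2) * exp (-a * ‖x‖))) ^ 2 := by gcongr; exact hbound x
    _ = C ^ 2 * ((1 + ‖x‖) ^ (2 * k) * exp (2 * (-a * ‖x‖))) * exp (2 * (ψ x / 2)) := by
        rw [hsq, hsq]
        ring
    _ = C ^ 2 * ((1 + ‖x‖) ^ (2 * k) * exp (-(2 * a) * ‖x‖)) * exp (ψ x) := by ring_nf

theorem integral_mul_dirDeriv_sub_eq_neg_gibbsMeasure {u w : E → ℝ} {v : E}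
    (hψ : Differentiable ℝ ψ) (hu : Differentiable ℝ u) (hw : Differentiable ℝ w)
    (hduw : Integrable (fun x => dirDeriv v u x * w x) (gibbsMeasure ψ))
    (hudw : Integrable (fun x => u x * (dirDeriv v w x - dirDeriv v ψ x * w x)) (gibbsMeasure ψ))
    (huw : Integrable (fun x => u x * w x) (gibbsMeasure ψ)) :
    ∫ x, u x * (dirDeriv v w x - dirDeriv v ψ x * w x) ∂gibbsMeasure ψ =
      -∫ x, dirDeriv v u x * w x ∂gibbsMeasure ψ := by
  have hψm : Measurable ψ := hψ.continuous.measurable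
  have hderiv (x : E) : fderiv ℝ (fun y => exp (-ψ y) * w y) x v =
      exp (-ψ x) * (dirDeriv v w x - dirDeriv v ψ x * w x) := by
    have hexp : HasFDerivAt (fun y => exp (-ψ y)) (exp (-ψ x) • -fderiv ℝ ψ x) x :=
      (hψ x).hasFDerivAt.neg.exp
    rw [(hexp.fun_mul (hw x).hasFDerivAt).fderiv]
    simp only [dirDeriv, add_apply, smul_apply, neg_apply, smul_eq_mul]
    ring
  simp only [integrable_gibbsMeasure_iff hψm, integral_gibbsMeasure hψm, smul_eq_mul,
    mul_left_comm (exp _)] at hduw hudw huw ⊢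
  simp only [← hderiv] at hudw ⊢
  exact integral_mul_fderiv_eq_neg_fderiv_mul_of_integrable hduw hudw huw
    (fun x _ => hu x) fun x _ => by fun_prop

end WeightedIntegration

section Tempered

variable {n : ℕ} {ψ f u w : Euc n → ℝ}

theorem IsRegularPotential.hasTemperateGrowth (hψ : IsRegularPotential ψ) :
    ψ.HasTemperateGrowth :=
  ⟨hψ.1, fun m => exists_comm.1 (hψ.2.2 m)⟩

theorem isTempered_dirDeriv {ρ : Euc n → ℝ} (hf : IsTempered ρ f) (v : Euc n) :
    IsTempered ρ (dirDeriv v f) := by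
  refine ⟨contDiff_dirDeriv hf.1 (by simp) v, fun m => ?_⟩
  obtain ⟨C, hC, a, ha, hbound⟩ := hf.2 (m + 1)
  refine ⟨(‖v‖ + 1) * C, by positivity, a, ha, fun x => ?_⟩
  have hdiff : ContDiff ℝ (m + 1) f := by exact_mod_cast contDiff_infty.1 hf.1 (m + 1)
  calc ‖iteratedFDeriv ℝ m (dirDeriv v f) x‖
      ≤ ‖v‖ * ‖iteratedFDeriv ℝ (m + 1) f x‖ := norm_iteratedFDeriv_dirDeriv_le hdiff v x
    _ ≤ (‖v‖ + 1) * (C / √(ρ x) * exp (-a * ‖x‖)) := by gcongr; exacts [by simp, hbound x]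
    _ = (‖v‖ + 1) * C / √(ρ x) * exp (-a * ‖x‖) := by ring

theorem IsTempered.memLp_two_mul (hf : IsTempered (fun x => exp (-ψ x)) f) (hψ : Measurable ψ)
    {p : Euc n → ℝ} (hp : p.HasTemperateGrowth) :
    MemLp (fun x => p x * f x) 2 (gibbsMeasure ψ) := by
  obtain ⟨k, K, hK⟩ := hp.2 0
  obtain ⟨C, -, a, ha, hbound⟩ := hf.2 0
  simp only [norm_iteratedFDeriv_zero] at hK hbound
  refine memLp_two_gibbsMeasure_of_norm_le (C := K * C) (k := k) hψ
    (hp.1.continuous.mul hf.1.continuous).aestronglyMeasurable ha fun x => ?_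
  calc ‖p x * f x‖
      ≤ K * (1 + ‖x‖) ^ k * (C / √(exp (-ψ x)) * exp (-a * ‖x‖)) := by
        rw [norm_mul]
        gcongr
        exacts [(norm_nonneg _).trans (hK x), hK x, hbound x]
    _ = K * C * (1 + ‖x‖) ^ k * (exp (ψ x / 2) * exp (-a * ‖x‖)) := by
        rw [← exp_half, div_eq_mul_inv, ← exp_neg, neg_div, neg_neg]
        ring

theorem IsTempered.memLp_two (hf : IsTempered (fun x => exp (-ψ x)) f) (hψ : Measurable ψ) :
    MemLp f 2 (gibbsMeasure ψ) := by
  simpa using hf.memLp_two_mul hψ (.const (1 : ℝ))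

theorem IsTempered.memLp_two_gradient (hf : IsTempered (fun x => exp (-ψ x)) f)
    (hψ : Measurable ψ) : MemLp (gradient f) 2 (gibbsMeasure ψ) := by
  have hcont : Continuous (gradient f) :=
    (differentiable_gradient (contDiff_infty.1 hf.1 2)).continuous
  rw [memLp_two_iff_integrable_sq_norm hcont.aestronglyMeasurable]
  simp only [norm_gradient_sq_eq_sum (EuclideanSpace.basisFun (Fin n) ℝ)]
  exact integrable_finsetSum _ fun i _ =>
    ((isTempered_dirDeriv hf _).memLp_two hψ).integrable_sq

theorem IsTempered.memLp_two_iteratedFDeriv_gradient (hf : IsTempered (fun x => exp (-ψ x)) f)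
    (hψ : ψ.HasTemperateGrowth) (v : Euc n) :
    MemLp (fun x => iteratedFDeriv ℝ 2 ψ x ![v, gradient f x]) 2 (gibbsMeasure ψ) := by
  set b := EuclideanSpace.basisFun (Fin n) ℝ
  have hψ₂ : ContDiff ℝ 2 ψ := contDiff_infty.1 hψ.1 2
  simp only [← inner_gradient_dirDeriv_eq_iteratedFDeriv hψ₂, inner_gradient_gradient_eq_sum b]
  exact memLp_finsetSum _ fun i _ =>
    (isTempered_dirDeriv hf (b i)).memLp_two_mul hψ.1.continuous.measurable
      (hasTemperateGrowth_dirDeriv (hasTemperateGrowth_dirDeriv hψ v) (b i))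

theorem IsTempered.integral_mul_lop (hu : IsTempered (fun x => exp (-ψ x)) u)
    (hw : IsTempered (fun x => exp (-ψ x)) w) (hψ : ψ.HasTemperateGrowth) :
    ∫ x, u x * Lop ψ w x ∂gibbsMeasure ψ =
      -∫ x, ⟪gradient u x, gradient w x⟫ ∂gibbsMeasure ψ := by
  set b := EuclideanSpace.basisFun (Fin n) ℝ
  have hψm : Measurable ψ := hψ.1.continuous.measurable
  have hw₂ : ContDiff ℝ 2 w := contDiff_infty.1 hw.1 2
  have hdw (i : Fin n) : IsTempered (fun x => exp (-ψ x)) (dirDeriv (b i) w) :=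
    isTempered_dirDeriv hw (b i)
  have hdu (i : Fin n) : MemLp (dirDeriv (b i) u) 2 (gibbsMeasure ψ) :=
    (isTempered_dirDeriv hu (b i)).memLp_two hψm
  have hadj (i : Fin n) : MemLp (fun x => dirDeriv (b i) (dirDeriv (b i) w) x -
      dirDeriv (b i) ψ x * dirDeriv (b i) w x) 2 (gibbsMeasure ψ) :=
    ((isTempered_dirDeriv (hdw i) (b i)).memLp_two hψm).sub
      ((hdw i).memLp_two_mul hψm (hasTemperateGrowth_dirDeriv hψ (b i)))
  have hdudw (i : Fin n) :
      Integrable (fun x => dirDeriv (b i) u x * dirDeriv (b i) w x) (gibbsMeasure ψ) :=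
    (hdu i).integrable_mul ((hdw i).memLp_two hψm)
  have hudw (i : Fin n) : Integrable (fun x => u x * (dirDeriv (b i) (dirDeriv (b i) w) x -
      dirDeriv (b i) ψ x * dirDeriv (b i) w x)) (gibbsMeasure ψ) :=
    (hu.memLp_two hψm).integrable_mul (hadj i)
  simp only [lop_eq_sum_dirDeriv b hw₂, inner_gradient_gradient_eq_sum b, Finset.mul_sum]
  rw [integral_finsetSum _ fun i _ => hudw i, integral_finsetSum _ fun i _ => hdudw i,
    ← Finset.sum_neg_distrib]
  exact Finset.sum_congr rfl fun i _ => integral_mul_dirDeriv_sub_eq_neg_gibbsMeasure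
    (hψ.1.differentiable (by simp)) (hu.1.differentiable (by simp))
    ((hdw i).1.differentiable (by simp)) (hdudw i) (hudw i)
    ((hu.memLp_two hψm).integrable_mul ((hdw i).memLp_two hψm))

end Tempered

section Poincare

variable {n : ℕ} {ψ f : Euc n → ℝ} {C κ : ℝ}

theorem isClosed_poincareSet (μ : Measure (Euc n)) : IsClosed (poincareSet μ) := by
  simp only [poincareSet, Set.ofPred_and, Set.ofPred_forall]
  exact isClosed_Ici.inter <| isClosed_iInter fun f => isClosed_iInter fun _ =>
    isClosed_iInter fun _ => isClosed_le (by fun_prop) (by fun_prop)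

theorem poincareConst_mem_poincareSet {μ : Measure (Euc n)} (hμ : (poincareSet μ).Nonempty) :
    poincareConst μ ∈ poincareSet μ :=
  (isClosed_poincareSet μ).csInf_mem hμ ⟨0, fun _ hC => hC.1⟩

theorem lop_dirDeriv_of_eigenfunction (hψ : ContDiff ℝ 2 ψ) (hf : ContDiff ℝ 3 f)
    (heig : ∀ x, Lop ψ f x = -κ * f x) (v x : Euc n) :
    Lop ψ (dirDeriv v f) x =
      -κ * dirDeriv v f x + iteratedFDeriv ℝ 2 ψ x ![v, gradient f x] := by
  have hdiff : Differentiable ℝ f := hf.differentiable (by norm_num)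
  rw [lop_dirDeriv hψ hf, funext heig, dirDeriv, fderiv_const_mul (hdiff x)]
  simp [dirDeriv]

theorem integral_norm_gradient_dirDeriv_sq (hψ : ψ.HasTemperateGrowth)
    (hf : IsTempered (fun x => exp (-ψ x)) f) (heig : ∀ x, Lop ψ f x = -κ * f x) (v : Euc n) :
    ∫ x, ‖gradient (dirDeriv v f) x‖ ^ 2 ∂gibbsMeasure ψ =
      κ * ∫ x, dirDeriv v f x ^ 2 ∂gibbsMeasure ψ -
        ∫ x, dirDeriv v f x * iteratedFDeriv ℝ 2 ψ x ![v, gradient f x] ∂gibbsMeasure ψ := by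
  have hdf : IsTempered (fun x => exp (-ψ x)) (dirDeriv v f) := isTempered_dirDeriv hf v
  have hL₂ : MemLp (dirDeriv v f) 2 (gibbsMeasure ψ) := hdf.memLp_two hψ.1.continuous.measurable
  have hhess : Integrable (fun x => dirDeriv v f x * iteratedFDeriv ℝ 2 ψ x ![v, gradient f x])
      (gibbsMeasure ψ) := hL₂.integrable_mul (hf.memLp_two_iteratedFDeriv_gradient hψ v)
  calc ∫ x, ‖gradient (dirDeriv v f) x‖ ^ 2 ∂gibbsMeasure ψ
      = -∫ x, dirDeriv v f x * Lop ψ (dirDeriv v f) x ∂gibbsMeasure ψ := by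
        simp only [hdf.integral_mul_lop hdf hψ, real_inner_self_eq_norm_sq, neg_neg]
    _ = -∫ x, (-κ * dirDeriv v f x ^ 2 +
          dirDeriv v f x * iteratedFDeriv ℝ 2 ψ x ![v, gradient f x]) ∂gibbsMeasure ψ := by
        simp only [lop_dirDeriv_of_eigenfunction (contDiff_infty.1 hψ.1 2) (contDiff_infty.1 hf.1 3)
          heig]
        congr! 3
        ring
    _ = _ := by
        rw [integral_add (hL₂.integrable_sq.const_mul (-κ)) hhess, integral_const_mul]
        ring

theorem eigenfunction_directional_inequality (hψ : ψ.HasTemperateGrowth)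
    (hC : C ∈ poincareSet (gibbsMeasure ψ)) (hf : IsTempered (fun x => exp (-ψ x)) f)
    (heig : ∀ x, Lop ψ f x = -κ * f x) (v : Euc n) :
    C * ∫ x, dirDeriv v f x * iteratedFDeriv ℝ 2 ψ x ![v, gradient f x] ∂gibbsMeasure ψ +
        (1 - C * κ) * ∫ x, dirDeriv v f x ^ 2 ∂gibbsMeasure ψ ≤
      (∫ x, dirDeriv v f x ∂gibbsMeasure ψ) ^ 2 := by
  have hdf : IsTempered (fun x => exp (-ψ x)) (dirDeriv v f) := isTempered_dirDeriv hf v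
  have hpoincare := hC.2 (dirDeriv v f) (contDiff_infty.1 hdf.1 1).locallyLipschitz
    ((hdf.memLp_two_gradient hψ.1.continuous.measurable).integrable_norm_pow two_ne_zero)
  rw [integral_norm_gradient_dirDeriv_sq hψ hf heig v] at hpoincare
  linarith

theorem norm_integral_gradient_sq_eq_sum {ι : Type*} [Fintype ι] (b : OrthonormalBasis ι ℝ (Euc n))
    {μ : Measure (Euc n)} (hf : Integrable (gradient f) μ) :
    ‖∫ x, gradient f x ∂μ‖ ^ 2 = ∑ i, (∫ x, dirDeriv (b i) f x ∂μ) ^ 2 := by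
  simp only [← b.sum_sq_inner_right, ← integral_inner hf, real_inner_comm,
    inner_gradient_eq_dirDeriv]

theorem eigenfunction_hessian_inequality [IsFiniteMeasure (gibbsMeasure ψ)]
    (hψ : ψ.HasTemperateGrowth) (hC : C ∈ poincareSet (gibbsMeasure ψ))
    (hf : IsTempered (fun x => exp (-ψ x)) f) (heig : ∀ x, Lop ψ f x = -κ * f x) :
    C * ∫ x, iteratedFDeriv ℝ 2 ψ x ![gradient f x, gradient f x] ∂gibbsMeasure ψ +
        (1 - C * κ) * ∫ x, ‖gradient f x‖ ^ 2 ∂gibbsMeasure ψ ≤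
      ‖∫ x, gradient f x ∂gibbsMeasure ψ‖ ^ 2 := by
  set b := EuclideanSpace.basisFun (Fin n) ℝ
  have hψm : Measurable ψ := hψ.1.continuous.measurable
  have hdf (i : Fin n) : MemLp (dirDeriv (b i) f) 2 (gibbsMeasure ψ) :=
    (isTempered_dirDeriv hf (b i)).memLp_two hψm
  have hhess (i : Fin n) : Integrable (fun x => dirDeriv (b i) f x *
      iteratedFDeriv ℝ 2 ψ x ![b i, gradient f x]) (gibbsMeasure ψ) :=
    (hdf i).integrable_mul (hf.memLp_two_iteratedFDeriv_gradient hψ (b i))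
  simp only [iteratedFDeriv_two_gradient_eq_sum b, norm_gradient_sq_eq_sum b]
  rw [integral_finsetSum _ fun i _ => (hdf i).integrable_sq,
    integral_finsetSum _ fun i _ => hhess i,
    norm_integral_gradient_sq_eq_sum b ((hf.memLp_two_gradient hψm).integrable one_le_two),
    Finset.mul_sum, Finset.mul_sum, ← Finset.sum_add_distrib]
  exact Finset.sum_le_sum fun i _ => eigenfunction_directional_inequality hψ hC hf heig (b i)

theorem eigenfunction_preferred_direction_general [IsFiniteMeasure (gibbsMeasure ψ)]
    (hψ : ψ.HasTemperateGrowth) (hC : C ∈ poincareSet (gibbsMeasure ψ)) (hCκ : C * κ ≤ 1)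
    (hf : IsTempered (fun x => exp (-ψ x)) f) (heig : ∀ x, Lop ψ f x = -κ * f x) :
    C * ∫ x, iteratedFDeriv ℝ 2 ψ x ![gradient f x, gradient f x] ∂gibbsMeasure ψ ≤
      ‖∫ x, gradient f x ∂gibbsMeasure ψ‖ ^ 2 := by
  have henergy : 0 ≤ ∫ x, ‖gradient f x‖ ^ 2 ∂gibbsMeasure ψ :=
    integral_nonneg fun x => by positivity
  exact (le_add_of_nonneg_right (mul_nonneg (sub_nonneg.2 hCκ) henergy)).trans
    (eigenfunction_hessian_inequality hψ hC hf heig)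

end Poincare

/-- The first eigenfunction has a preferred direction:
`|∫ ∇f dμ|² ≥ (1/λ) ∫ ⟨(∇²ψ)∇f, ∇f⟩ dμ`. -/
theorem eigenfunction_preferred_direction {n : ℕ} (μ : Measure (Euc n))
    [IsProbabilityMeasure μ] (ψ : Euc n → ℝ) (hreg : IsRegularMeasure μ ψ)
    (lam : ℝ) (hlam : lam = 1 / poincareConst μ)
    (f : Euc n → ℝ) (hf : IsTempered (fun x => Real.exp (-ψ x)) f)
    (hmean : ∫ x, f x ∂μ = 0) (hnorm : ∫ x, f x ^ 2 ∂μ = 1)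
    (heig : ∀ x, Lop ψ f x = -lam * f x) :
    (1 / lam) * ∫ x, iteratedFDeriv ℝ 2 ψ x ![gradient f x, gradient f x] ∂μ ≤
      ‖∫ x, gradient f x ∂μ‖ ^ 2 := by
  obtain ⟨hψ, hμ : μ = gibbsMeasure ψ⟩ := hreg
  subst hμ hlam
  rw [one_div_one_div]
  rcases (poincareSet (gibbsMeasure ψ)).eq_empty_or_nonempty with hempty | hne
  -- Without a Poincaré inequality the convention `sInf ∅ = 0` makes the left-hand side vanish.
  · simp [poincareConst, hempty]
  · exact eigenfunction_preferred_direction_general hψ.hasTemperateGrowth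
      (poincareConst_mem_poincareSet hne) (by simpa using mul_inv_le_one) hf heig
end
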